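/- arXiv:2403.11676 — 8 statements merged into one kernel-verified Lean document; each statement's English description precedes it below -/
import Mathlib

section
/- Let p be a prime, R a δ-ring, I an ideal of R containing p, and S an R-algebra which is I-adically complete and separated and I-adically étale over R. Then there exists a unique δ-structure on S making the structure homomorphism R → S a δ-homomorphism. -/
/-- A δ-structure on a commutative ring `R`, relative to a prime `p`. -/
structure DeltaStructure (p : ℕ) (R : Type*) [CommRing R] where
  δ : R → R
  delta_zero : δ 0 = 0
  delta_one : δ 1 = 0
  delta_add : ∀ x y : R, δ (x + y) =
    δ x + δ y - ∑ i ∈ Finset.Ioo 0 p, ((p.choose i / p : ℕ) : R) * x ^ i * y ^ (p - i)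
  delta_mul : ∀ x y : R, δ (x * y) =
    δ x * y ^ p + x ^ p * δ y + (p : R) * δ x * δ y

universe u

set_option linter.unusedSectionVars false
set_option linter.style.haveILetI false

namespace DeltaW2

/-- The polynomial `((x+y)^p - x^p - y^p)/p`. -/
def c (p : ℕ) {A : Type*} [CommRing A] (x y : A) : A :=
  ∑ i ∈ Finset.Ioo 0 p, ((p.choose i / p : ℕ) : A) * x ^ i * y ^ (p - i)

section c
variable {p : ℕ} {A B : Type*} [CommRing A] [CommRing B]

lemma map_c (f : A →+* B) (x y : A) : f (c p x y) = c p (f x) (f y) := by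
  simp [c, map_sum]

lemma p_mul_c (hp : p.Prime) (x y : A) : (p : A) * c p x y = (x + y) ^ p - x ^ p - y ^ p := by
  have h1 : (x + y) ^ p = y ^ p + (∑ i ∈ Finset.Ioo 0 p, x ^ i * y ^ (p - i) * (p.choose i : A))
      + x ^ p := by
    have hI : Finset.range p = insert 0 (Finset.Ioo 0 p) := by
      ext i
      have := hp.pos
      simp only [Finset.mem_range, Finset.mem_insert, Finset.mem_Ioo]
      omega
    rw [add_pow, Finset.sum_range_succ, hI, Finset.sum_insert (by simp)]
    simp
  rw [h1, c, Finset.mul_sum]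
  have : ∀ i ∈ Finset.Ioo 0 p, (p : A) * (((p.choose i / p : ℕ) : A) * x ^ i * y ^ (p - i)) =
      x ^ i * y ^ (p - i) * (p.choose i : A) := by
    intro i hi
    rw [Finset.mem_Ioo] at hi
    have hd : p ∣ p.choose i := hp.dvd_choose_self hi.1.ne' hi.2
    have : ((p * (p.choose i / p) : ℕ) : A) = (p.choose i : A) := by
      rw [Nat.mul_div_cancel' hd]
    rw [← this]
    push_cast
    ring
  rw [Finset.sum_congr rfl this]
  ring

lemma c_zero_left (y : A) : c p 0 y = 0 := by
  apply Finset.sum_eq_zero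
  intro i hi
  rw [Finset.mem_Ioo] at hi
  simp [hi.1.ne']

lemma c_mul (z x y : A) : c p (z * x) (z * y) = z ^ p * c p x y := by
  rw [c, c, Finset.mul_sum]
  apply Finset.sum_congr rfl
  intro i hi
  rw [Finset.mem_Ioo] at hi
  have : z ^ p = z ^ i * z ^ (p - i) := by rw [← pow_add]; congr 1; omega
  rw [this, mul_pow, mul_pow]
  ring

lemma c_mem (J : Ideal A) {x : A} (hx : x ∈ J) (y : A) : c p x y ∈ J := by
  apply Ideal.sum_mem
  intro i hi
  rw [Finset.mem_Ioo] at hi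
  exact J.mul_mem_right _ (J.mul_mem_left _ (Ideal.pow_mem_of_mem _ hx _ hi.1))

lemma c_comm (hp : p.Prime) (x y : A) : c p x y = c p y x := by
  let X : MvPolynomial (Fin 2) ℤ := MvPolynomial.X 0
  let Y : MvPolynomial (Fin 2) ℤ := MvPolynomial.X 1
  have h : c p X Y = c p Y X := by
    have h0 : (p : MvPolynomial (Fin 2) ℤ) ≠ 0 := by exact_mod_cast hp.ne_zero
    apply mul_left_cancel₀ h0
    rw [p_mul_c hp, p_mul_c hp]
    ring
  have := congrArg (MvPolynomial.aeval (R := ℤ) ![x, y]).toRingHom h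
  rw [map_c, map_c] at this
  simpa [X, Y] using this

lemma c_assoc (hp : p.Prime) (x y z : A) :
    c p x y + c p (x + y) z = c p y z + c p x (y + z) := by
  let X : MvPolynomial (Fin 3) ℤ := MvPolynomial.X 0
  let Y : MvPolynomial (Fin 3) ℤ := MvPolynomial.X 1
  let Z : MvPolynomial (Fin 3) ℤ := MvPolynomial.X 2
  have h : c p X Y + c p (X + Y) Z = c p Y Z + c p X (Y + Z) := by
    have h0 : (p : MvPolynomial (Fin 3) ℤ) ≠ 0 := by exact_mod_cast hp.ne_zero
    apply mul_left_cancel₀ h0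
    rw [mul_add, mul_add, p_mul_c hp, p_mul_c hp, p_mul_c hp, p_mul_c hp]
    ring
  have := congrArg (MvPolynomial.aeval (R := ℤ) ![x, y, z]).toRingHom h
  rw [map_add, map_add, map_c, map_c, map_c, map_c] at this
  simpa [X, Y, Z] using this

end c

/-- Witt vectors of length two. -/
@[ext]
structure W2 (p : ℕ) (A : Type*) where
  fst : A
  snd : A

variable {p : ℕ} [hp : Fact p.Prime]

section ring
variable {A : Type*} [CommRing A]

instance : Zero (W2 p A) := ⟨⟨0, 0⟩⟩
instance : One (W2 p A) := ⟨⟨1, 0⟩⟩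
instance : Add (W2 p A) := ⟨fun x y => ⟨x.fst + y.fst, x.snd + y.snd - c p x.fst y.fst⟩⟩
instance : Mul (W2 p A) := ⟨fun x y => ⟨x.fst * y.fst,
  x.snd * y.fst ^ p + x.fst ^ p * y.snd + (p : A) * x.snd * y.snd⟩⟩
instance : Neg (W2 p A) := ⟨fun x => ⟨-x.fst, c p (-x.fst) x.fst - x.snd⟩⟩

@[simp] lemma zero_fst : (0 : W2 p A).fst = 0 := rfl
@[simp] lemma zero_snd : (0 : W2 p A).snd = 0 := rfl
@[simp] lemma one_fst : (1 : W2 p A).fst = 1 := rfl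
@[simp] lemma one_snd : (1 : W2 p A).snd = 0 := rfl
@[simp] lemma add_fst (x y : W2 p A) : (x + y).fst = x.fst + y.fst := rfl
@[simp] lemma add_snd (x y : W2 p A) :
    (x + y).snd = x.snd + y.snd - c p x.fst y.fst := rfl
@[simp] lemma mul_fst (x y : W2 p A) : (x * y).fst = x.fst * y.fst := rfl
@[simp] lemma mul_snd (x y : W2 p A) : (x * y).snd =
    x.snd * y.fst ^ p + x.fst ^ p * y.snd + (p : A) * x.snd * y.snd := rfl
@[simp] lemma neg_fst (x : W2 p A) : (-x).fst = -x.fst := rfl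
@[simp] lemma neg_snd (x : W2 p A) : (-x).snd = c p (-x.fst) x.fst - x.snd := rfl

lemma w_add_comm (x y : W2 p A) : x + y = y + x := by
  ext
  · simp [add_comm]
  · simp only [add_snd]
    rw [c_comm hp.out]
    ring

lemma w_zero_add (x : W2 p A) : 0 + x = x := by
  ext <;> simp [c_zero_left]

lemma w_mul_comm (x y : W2 p A) : x * y = y * x := by
  ext
  · simp [mul_comm]
  · simp only [mul_snd]
    ring

lemma w_one_mul (x : W2 p A) : 1 * x = x := by
  ext <;> simp

lemma w_mul_add (x y z : W2 p A) : x * (y + z) = x * y + x * z := by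
  ext
  · simp [mul_add]
  · simp only [mul_snd, add_fst, add_snd, mul_fst]
    rw [c_mul]
    have h := p_mul_c hp.out y.fst z.fst
    linear_combination (-x.snd) * h

lemma w_zero_mul (x : W2 p A) : 0 * x = 0 := by
  ext <;> simp [hp.out.ne_zero]

instance : CommRing (W2 p A) where
  add_assoc x y z := by
    ext
    · simp [add_assoc]
    · simp only [add_snd, add_fst]
      have h := c_assoc hp.out x.fst y.fst z.fst
      linear_combination -h
  zero_add := w_zero_add
  add_zero x := by rw [w_add_comm, w_zero_add]
  add_comm := w_add_comm
  mul_assoc x y z := by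
    ext
    · simp [mul_assoc]
    · simp only [mul_snd, mul_fst]
      ring
  mul_comm := w_mul_comm
  one_mul := w_one_mul
  mul_one x := by rw [w_mul_comm, w_one_mul]
  zero_mul := w_zero_mul
  mul_zero x := by rw [w_mul_comm, w_zero_mul]
  left_distrib := w_mul_add
  right_distrib x y z := by rw [w_mul_comm, w_mul_add, w_mul_comm z, w_mul_comm z]
  neg_add_cancel x := by
    ext <;> simp
  nsmul := nsmulRec
  zsmul := zsmulRec

/-- The projection to the first component. -/
def proj (p : ℕ) [Fact p.Prime] (A : Type*) [CommRing A] : W2 p A →+* A where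
  toFun := W2.fst
  map_zero' := rfl
  map_one' := rfl
  map_add' _ _ := rfl
  map_mul' _ _ := rfl

@[simp] lemma proj_apply (x : W2 p A) : proj p A x = x.fst := rfl

/-- Functoriality. -/
def mapW {B : Type*} [CommRing B] (f : A →+* B) : W2 p A →+* W2 p B where
  toFun x := ⟨f x.fst, f x.snd⟩
  map_zero' := by ext <;> simp
  map_one' := by ext <;> simp
  map_add' _ _ := by ext <;> simp [map_c]
  map_mul' _ _ := by ext <;> simp

@[simp] lemma mapW_fst {B : Type*} [CommRing B] (f : A →+* B) (x : W2 p A) :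
    (mapW f x).fst = f x.fst := rfl
@[simp] lemma mapW_snd {B : Type*} [CommRing B] (f : A →+* B) (x : W2 p A) :
    (mapW f x).snd = f x.snd := rfl

/-- The section attached to a delta structure. -/
def ofDelta (D : DeltaStructure p A) : A →+* W2 p A where
  toFun x := ⟨x, D.δ x⟩
  map_zero' := by ext <;> simp [D.delta_zero]
  map_one' := by ext <;> simp [D.delta_one]
  map_add' _ _ := by ext <;> simp [D.delta_add, c]
  map_mul' _ _ := by ext <;> simp [D.delta_mul]

@[simp] lemma ofDelta_fst (D : DeltaStructure p A) (x : A) : (ofDelta D x).fst = x := rfl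
@[simp] lemma ofDelta_snd (D : DeltaStructure p A) (x : A) : (ofDelta D x).snd = D.δ x := rfl

/-- Pairs with components in given ideals. -/
def pairIdeal (p : ℕ) [hp : Fact p.Prime] {A : Type*} [CommRing A] (J K : Ideal A) (h : J ≤ K) :
    Ideal (W2 p A) where
  carrier := {x | x.fst ∈ J ∧ x.snd ∈ K}
  zero_mem' := ⟨J.zero_mem, K.zero_mem⟩
  add_mem' := by
    rintro x y ⟨hx, hx'⟩ ⟨hy, hy'⟩
    exact ⟨J.add_mem hx hy, K.sub_mem (K.add_mem hx' hy') (c_mem K (h hx) _)⟩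
  smul_mem' := by
    rintro x y ⟨hy, hy'⟩
    refine ⟨J.mul_mem_left _ hy, K.add_mem (K.add_mem (K.mul_mem_left _ ?_)
      (K.mul_mem_left _ hy')) (K.mul_mem_left _ hy')⟩
    exact Ideal.pow_mem_of_mem _ (h hy) _ hp.out.pos

lemma mem_pairIdeal {J K : Ideal A} (h : J ≤ K) (x : W2 p A) :
    x ∈ pairIdeal p J K h ↔ x.fst ∈ J ∧ x.snd ∈ K := Iff.rfl

lemma ker_pow_le (k : ℕ) :
    (RingHom.ker (proj p A)) ^ (k + 1) ≤ pairIdeal p ⊥ (Ideal.span {(p : A) ^ k}) bot_le := by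
  induction k with
  | zero =>
    intro x hx
    rw [zero_add, pow_one, RingHom.mem_ker] at hx
    exact ⟨hx, by simp⟩
  | succ k ih =>
    rw [pow_succ]
    rw [Ideal.mul_le]
    intro x hx y hy
    obtain ⟨h1, h2⟩ := ih hx
    rw [RingHom.mem_ker, proj_apply] at hy
    rw [Ideal.mem_bot] at h1
    rw [Ideal.mem_span_singleton] at h2
    obtain ⟨d, hd⟩ := h2
    rw [mem_pairIdeal]
    refine ⟨by simp [hy], ?_⟩
    rw [mul_snd, h1, hy, hd, zero_pow hp.out.ne_zero, Ideal.mem_span_singleton]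
    exact ⟨d * y.snd, by ring⟩

lemma ker_nilpotent (n : ℕ) (h : (p : A) ^ n = 0) : IsNilpotent (RingHom.ker (proj p A)) := by
  refine ⟨n + 1, ?_⟩
  rw [Ideal.zero_eq_bot, eq_bot_iff]
  intro x hx
  obtain ⟨h1, h2⟩ := ker_pow_le n hx
  rw [h, Ideal.span_singleton_zero] at h2
  rw [Ideal.mem_bot]
  ext
  · simpa using h1
  · simpa using h2

lemma delta_pow_mem (D : DeltaStructure p A) (I : Ideal A) (hpI : (p : A) ∈ I) (n : ℕ) :
    I ^ (n + 1) ≤ (pairIdeal p (I ^ (n + 1)) (I ^ n) (Ideal.pow_le_pow_right n.le_succ)).comap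
      (ofDelta D) := by
  induction n with
  | zero =>
    intro x hx
    exact ⟨hx, by simp⟩
  | succ n ih =>
    refine (pow_succ' I (n + 1)).le.trans (Ideal.mul_le.mpr ?_)
    intro x hx y hy
    obtain ⟨-, h2⟩ := ih hy
    rw [ofDelta_snd] at h2
    rw [Ideal.mem_comap, map_mul]
    refine ⟨?_, ?_⟩
    · rw [pow_succ' I (n + 1)]
      exact Ideal.mul_mem_mul hx hy
    · simp only [mul_snd, ofDelta_fst, ofDelta_snd]
      refine Ideal.add_mem _ (Ideal.add_mem _ (Ideal.mul_mem_left _ _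
        (Ideal.pow_mem_of_mem _ hy _ hp.out.pos)) ?_) ?_
      · rw [pow_succ']
        exact Ideal.mul_mem_mul (Ideal.pow_mem_of_mem _ hx _ hp.out.pos) h2
      · rw [pow_succ', mul_assoc]
        exact Ideal.mul_mem_mul hpI (Ideal.mul_mem_left _ _ h2)

end ring

/-- Infinitesimal lifting in terms of ring homomorphisms. -/
lemma lift_aux {R A B C : Type u} [CommRing R] [CommRing A] [CommRing B] [CommRing C]
    [Algebra R A] [Algebra.FormallyEtale R A] (g : B →+* C) (hg : Function.Surjective g)
    (hn : IsNilpotent (RingHom.ker g)) (h : R →+* B) (f : A →+* C)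
    (hc : f.comp (algebraMap R A) = g.comp h) :
    ∃! φ : A →+* B, g.comp φ = f ∧ φ.comp (algebraMap R A) = h := by
  letI : Algebra R B := h.toAlgebra
  letI : Algebra R C := (g.comp h).toAlgebra
  let g' : B →ₐ[R] C := { g with commutes' := fun r => rfl }
  let f' : A →ₐ[R] C := { f with commutes' := fun r => RingHom.congr_fun hc r }
  let φ := Algebra.FormallySmooth.liftOfSurjective f' g' hg hn
  refine ⟨φ.toRingHom, ⟨?_, ?_⟩, ?_⟩
  · ext x
    exact AlgHom.congr_fun (Algebra.FormallySmooth.comp_liftOfSurjective f' g' hg hn) x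
  · ext x
    exact φ.commutes x
  · rintro ψ ⟨h1, h2⟩
    let ψ' : A →ₐ[R] B := { ψ with commutes' := fun r => RingHom.congr_fun h2 r }
    have : ψ' = φ := by
      apply Algebra.FormallyUnramified.lift_unique' g' hn
      rw [Algebra.FormallySmooth.comp_liftOfSurjective f' g' hg hn]
      ext x
      exact RingHom.congr_fun h1 x
    rw [← this]

/-- Lifting from an `R`-algebra whose reduction modulo `J` is étale. -/
lemma lift_quot {R S B C : Type u} [CommRing R] [CommRing S] [Algebra R S]
    [CommRing B] [CommRing C] (J : Ideal R)
    (het : letI : Algebra (R ⧸ J) (S ⧸ J.map (algebraMap R S)) :=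
        (Ideal.quotientMap (J.map (algebraMap R S)) (algebraMap R S)
          Ideal.le_comap_map).toAlgebra
      Algebra.Etale (R ⧸ J) (S ⧸ J.map (algebraMap R S)))
    (g : B →+* C) (hg : Function.Surjective g)
    (hn : IsNilpotent (RingHom.ker g)) (h : R →+* B) (hJ : ∀ r ∈ J, h r = 0) (f : S →+* C)
    (hc : f.comp (algebraMap R S) = g.comp h) :
    ∃! φ : S →+* B, g.comp φ = f ∧ φ.comp (algebraMap R S) = h := by
  letI : Algebra (R ⧸ J) (S ⧸ J.map (algebraMap R S)) :=
        (Ideal.quotientMap (J.map (algebraMap R S)) (algebraMap R S)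
          Ideal.le_comap_map).toAlgebra
  haveI : Algebra.Etale (R ⧸ J) (S ⧸ J.map (algebraMap R S)) := het
  have ker_of : ∀ {D : Type u} [CommRing D] (k : S →+* D),
      (∀ r ∈ J, k (algebraMap R S r) = 0) → ∀ s ∈ J.map (algebraMap R S), k s = 0 := by
    intro D _ k hk s hs
    have : J.map (algebraMap R S) ≤ RingHom.ker k := Ideal.map_le_iff_le_comap.mpr hk
    exact this hs
  have hfJ : ∀ s ∈ J.map (algebraMap R S), f s = 0 := by
    apply ker_of
    intro r hr
    have := RingHom.congr_fun hc r
    simp only [RingHom.comp_apply] at this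
    rw [this, hJ r hr, map_zero]
  obtain ⟨φ, ⟨h1, h2⟩, h3⟩ := lift_aux (R := R ⧸ J) (A := S ⧸ J.map (algebraMap R S)) g hg hn
    (Ideal.Quotient.lift J h hJ) (Ideal.Quotient.lift _ f hfJ) (by
      apply Ideal.Quotient.ringHom_ext
      ext r
      exact RingHom.congr_fun hc r)
  refine ⟨φ.comp (Ideal.Quotient.mk _), ⟨?_, ?_⟩, ?_⟩
  · rw [← RingHom.comp_assoc, h1]
    ext x
    rfl
  · ext r
    exact RingHom.congr_fun h2 (Ideal.Quotient.mk _ r)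
  · rintro ψ ⟨k1, k2⟩
    have hψ : ∀ s ∈ J.map (algebraMap R S), ψ s = 0 := by
      apply ker_of
      intro r hr
      rw [← hJ r hr, ← k2]
      rfl
    rw [← h3 (Ideal.Quotient.lift _ ψ hψ) ⟨?_, ?_⟩]
    · ext x
      rfl
    · apply Ideal.Quotient.ringHom_ext
      ext s
      exact RingHom.congr_fun k1 s
    · apply Ideal.Quotient.ringHom_ext
      ext s
      exact RingHom.congr_fun k2 s

end DeltaW2

open DeltaW2

/-- If `R` is a δ-ring, `I ⊆ R` an ideal containing `p`, and `S` an `R`-algebra which is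
`I`-adically complete and separated and `I`-adically étale over `R`, then there exists a
unique δ-structure on `S` making `R → S` a δ-homomorphism. -/
theorem unique_delta_structure_of_etale (p : ℕ) (hp : p.Prime)
    (R S : Type u) [CommRing R] [CommRing S] [Algebra R S]
    (DR : DeltaStructure p R) (I : Ideal R) (hpI : (p : R) ∈ I)
    (hcomplete : IsAdicComplete I S)
    (hetale : ∀ n : ℕ, 0 < n →
      letI : Algebra (R ⧸ I ^ n) (S ⧸ (I ^ n).map (algebraMap R S)) :=
        (Ideal.quotientMap ((I ^ n).map (algebraMap R S)) (algebraMap R S)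
          Ideal.le_comap_map).toAlgebra
      Algebra.Etale (R ⧸ I ^ n) (S ⧸ (I ^ n).map (algebraMap R S))) :
    ∃! DS : DeltaStructure p S,
      ∀ r : R, DS.δ (algebraMap R S r) = algebraMap R S (DR.δ r) := by
  haveI : Fact p.Prime := ⟨hp⟩
  let J : ℕ → Ideal S := fun n => (I ^ n).map (algebraMap R S)
  have hsm : ∀ n (x y : S), x ≡ y [SMOD (I ^ n • ⊤ : Submodule R S)] ↔
      Ideal.Quotient.mk (J n) x = Ideal.Quotient.mk (J n) y := by
    intro n x y
    rw [SModEq.sub_mem, Ideal.smul_top_eq_map, Ideal.Quotient.eq]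
    rfl
  have hsep : ∀ x y : S, (∀ n, Ideal.Quotient.mk (J n) x = Ideal.Quotient.mk (J n) y) → x = y := by
    intro x y h
    rw [← sub_eq_zero]
    apply hcomplete.toIsHausdorff.haus'
    intro n
    rw [hsm, map_sub, h n, sub_self, map_zero]
  let h : ∀ n, R →+* W2 p (S ⧸ J n) := fun n =>
    (mapW ((Ideal.Quotient.mk (J n)).comp (algebraMap R S))).comp (ofDelta DR)
  have hmem : ∀ n (r : R), r ∈ I ^ n → Ideal.Quotient.mk (J n) (algebraMap R S r) = 0 := by
    intro n r hr
    rw [Ideal.Quotient.eq_zero_iff_mem]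
    exact Ideal.mem_map_of_mem _ hr
  have key : ∀ n, ∃! φ : S →+* W2 p (S ⧸ J n),
      (proj p (S ⧸ J n)).comp φ = Ideal.Quotient.mk (J n) ∧
      φ.comp (algebraMap R S) = h n := by
    intro n
    apply lift_quot (I ^ (n + 1)) (hetale (n + 1) n.succ_pos)
    · intro x
      exact ⟨⟨x, 0⟩, rfl⟩
    · apply ker_nilpotent n
      have := hmem n ((p : R) ^ n) (Ideal.pow_mem_pow hpI n)
      simpa using this
    · intro r hr
      obtain ⟨-, h2⟩ := delta_pow_mem DR I hpI n hr
      ext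
      · exact hmem n _ (Ideal.pow_le_pow_right n.le_succ hr)
      · exact hmem n _ h2
    · rfl
  choose φ hφ hu using key
  have hfst : ∀ n s, (φ n s).fst = Ideal.Quotient.mk (J n) s := fun n s =>
    RingHom.congr_fun (hφ n).1 s
  have hJ : ∀ {m n}, m ≤ n → J n ≤ J m := fun hmn => Ideal.map_mono (Ideal.pow_le_pow_right hmn)
  have hcompat : ∀ {m n} (hmn : m ≤ n) (s : S),
      (φ m s).snd = Ideal.Quotient.factor (hJ hmn) (φ n s).snd := by
    intro m n hmn s
    rw [← hu m ((mapW (Ideal.Quotient.factor (hJ hmn))).comp (φ n)) ⟨?_, ?_⟩]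
    · rfl
    · ext s
      change Ideal.Quotient.factor (hJ hmn) (φ n s).fst = _
      rw [hfst]
      rfl
    · rw [RingHom.comp_assoc, (hφ n).2]
      rfl
  have hex : ∀ s : S, ∃ d : S, ∀ n, Ideal.Quotient.mk (J n) d = (φ n s).snd := by
    intro s
    choose e he using fun n => Ideal.Quotient.mk_surjective (φ n s).snd
    obtain ⟨L, hL⟩ := hcomplete.toIsPrecomplete.prec' e (by
      intro m n hmn
      rw [hsm, he m, hcompat hmn, ← he n]
      rfl)
    refine ⟨L, fun n => ?_⟩
    rw [← he n]
    exact ((hsm n _ _).1 (hL n)).symm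
  choose d hd using hex
  refine ⟨⟨d, ?_, ?_, ?_, ?_⟩, ?_, ?_⟩
  · apply hsep
    intro n
    rw [hd, map_zero, map_zero]
    rfl
  · apply hsep
    intro n
    rw [hd, map_one, map_zero]
    rfl
  · intro x y
    change d (x + y) = d x + d y - c p x y
    apply hsep
    intro n
    rw [hd, map_add, add_snd, hfst, hfst, map_sub, map_add, hd, hd, map_c]
  · intro x y
    apply hsep
    intro n
    rw [hd, map_mul, mul_snd, hfst, hfst]
    simp only [map_add, map_mul, map_pow, hd, map_natCast]
  · intro r
    apply hsep
    intro n
    change Ideal.Quotient.mk (J n) (d _) = _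
    rw [hd, ← RingHom.comp_apply, (hφ n).2]
    rfl
  · intro D hD
    have hDd : D.δ = d := by
      funext s
      apply hsep
      intro n
      rw [hd, ← hu n ((mapW (Ideal.Quotient.mk (J n))).comp (ofDelta D)) ⟨?_, ?_⟩]
      · rfl
      · rfl
      · ext r
        · rfl
        · exact congrArg (Ideal.Quotient.mk (J n)) (hD r)
    cases D
    subst hDd
    rfl
end

section
/- Let p be a prime, R a δ-ring, I an ideal of R containing p, and f : R → R' a δ-homomorphism of δ-rings whose underlying ring homomorphism is I-adically étale. Let S be a δ-ring, g' : R' → S a ring homomorphism, and g = g'∘f. If g is a δ-homomorphism and S is g(I)-adically separated (i.e. the intersection of the powers of the ideal g(I)S is zero), then g' is a δ-homomorphism. -/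
universe u

/-- Derivations that vanish on the base of a formally unramified algebra are zero. -/
theorem der_zero_aux {B A C M : Type*} [CommRing B] [CommRing A] [CommRing C] [Algebra B A]
    [Algebra.FormallyUnramified B A] [AddCommGroup M] [Module A M]
    (π : C →+* A) (hπ : Function.Surjective π) (d : C →+ M)
    (hker : ∀ c, π c = 0 → d c = 0)
    (hmul : ∀ x y, d (x * y) = π x • d y + π y • d x)
    (hB : ∀ b : B, ∃ c, π c = algebraMap B A b ∧ d c = 0) : ∀ c, d c = 0 := by
  have hd : ∀ x y, π x = π y → d x = d y := fun x y h => by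
    have := hker (x - y) (by rw [map_sub, h, sub_self])
    rwa [map_sub, sub_eq_zero] at this
  let D : A → M := fun a => d (Function.surjInv hπ a)
  have hD : ∀ c, D (π c) = d c := fun c => hd _ _ (Function.surjInv_eq hπ _)
  letI : Module B M := Module.compHom M (algebraMap B A)
  haveI : IsScalarTower B A M := IsScalarTower.of_algebraMap_smul fun _ _ => rfl
  have hDmul : ∀ a b, D (a * b) = a • D b + b • D a := fun a b => by
    obtain ⟨x, rfl⟩ := hπ a
    obtain ⟨y, rfl⟩ := hπ b
    rw [← map_mul, hD, hD, hD, hmul]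
  have hDB : ∀ b : B, D (algebraMap B A b) = 0 := fun b => by
    obtain ⟨c, hc, h0⟩ := hB b
    rw [← hc, hD, h0]
  let L : A →ₗ[B] M :=
    { toFun := D
      map_add' := fun a b => by
        obtain ⟨x, rfl⟩ := hπ a
        obtain ⟨y, rfl⟩ := hπ b
        rw [← map_add, hD, hD, hD, map_add]
      map_smul' := fun b a => by
        rw [Algebra.smul_def, hDmul, hDB, smul_zero, add_zero]
        rfl }
  let DD : Derivation B A M := Derivation.mk' L hDmul
  have key : ∀ a, DD a = 0 := fun a => by
    rw [← DD.liftKaehlerDifferential_comp_D a,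
      Subsingleton.elim (KaehlerDifferential.D B A a) 0, map_zero]
  intro c
  rw [← hD]
  exact key _

/-- Frobenius on a ring in which `p = 0`. -/
def frobAux (p : ℕ) (hp : p.Prime) (T : Type*) [CommRing T] (h : (p : T) = 0) : T →+* T where
  toFun x := x ^ p
  map_one' := one_pow p
  map_zero' := zero_pow hp.ne_zero
  map_mul' x y := mul_pow x y p
  map_add' x y := by
    obtain ⟨r, hr⟩ := exists_add_pow_prime_eq hp x y
    rw [hr, h]; ring

/-- Let `f : R → R'` be a δ-homomorphism of δ-rings which is `I`-adically étale for an
ideal `I` of `R` containing `p`. If `g' : R' → S` is a ring homomorphism to a δ-ring `S`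
such that `g = g' ∘ f` is a δ-homomorphism and `S` is `g(I)`-adically separated, then `g'`
is a δ-homomorphism. -/
theorem delta_hom_of_etale (p : ℕ) (hp : p.Prime)
    (R R' S : Type u) [CommRing R] [CommRing R'] [CommRing S]
    (DR : DeltaStructure p R) (DR' : DeltaStructure p R') (DS : DeltaStructure p S)
    (I : Ideal R) (hpI : (p : R) ∈ I)
    (f : R →+* R') (hf : ∀ x : R, DR'.δ (f x) = f (DR.δ x))
    (hetale : ∀ n : ℕ, 0 < n →
      letI : Algebra (R ⧸ I ^ n) (R' ⧸ (I ^ n).map f) :=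
        (Ideal.quotientMap ((I ^ n).map f) f Ideal.le_comap_map).toAlgebra
      Algebra.Etale (R ⧸ I ^ n) (R' ⧸ (I ^ n).map f))
    (g' : R' →+* S)
    (hg : ∀ x : R, DS.δ ((g'.comp f) x) = (g'.comp f) (DR.δ x))
    (hsep : ∀ x : S, (∀ n : ℕ, x ∈ (I.map (g'.comp f)) ^ n) → x = 0) :
    ∀ x : R', DS.δ (g' x) = g' (DR'.δ x) := by
  set J : Ideal S := I.map (g'.comp f) with hJ
  have hpJ : (p : S) ∈ J := by
    have := Ideal.mem_map_of_mem (g'.comp f) hpI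
    rwa [map_natCast] at this
  let d : R' → S := fun x => DS.δ (g' x) - g' (DR'.δ x)
  have hadd : ∀ x y, d (x + y) = d x + d y := fun x y => by
    simp only [d, map_add, DS.delta_add, DR'.delta_add, map_sub, map_sum, map_mul, map_pow,
      map_natCast]
    ring
  have hmul : ∀ x y, d (x * y) = (g' x ^ p + p * g' (DR'.δ x)) * d y
      + (g' y ^ p + p * DS.δ (g' y)) * d x := fun x y => by
    simp only [d, map_mul, DS.delta_mul, DR'.delta_mul, map_add, map_pow, map_natCast]
    ring
  have hbase : ∀ r, d (f r) = 0 := fun r => by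
    have := hg r
    simp only [RingHom.comp_apply] at this
    simp only [d, hf, this, sub_self]
  have hI1 : ∀ c ∈ (I ^ 1).map f, g' c ∈ J := fun c hc => by
    rw [pow_one] at hc
    have := Ideal.mem_map_of_mem g' hc
    rwa [Ideal.map_map] at this
  have hpT : ((p : ℕ) : S ⧸ J) = 0 := by
    rw [← map_natCast (Ideal.Quotient.mk J), Ideal.Quotient.eq_zero_iff_mem]
    exact hpJ
  let ψ : R' ⧸ (I ^ 1).map f →+* S ⧸ J :=
    (frobAux p hp (S ⧸ J) hpT).comp (Ideal.quotientMap J g' hI1)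
  have hψ : ∀ x s, ψ (Ideal.Quotient.mk _ x) = Ideal.Quotient.mk J (g' x ^ p + p * s) := by
    intro x s
    rw [map_add, map_mul, map_natCast, hpT, zero_mul, add_zero, map_pow]
    rfl
  have main : ∀ n, ∀ x, d x ∈ J ^ n := by
    intro n
    induction n with
    | zero => intro x; simp
    | succ n ih =>
      let M := (↥(J ^ n)) ⧸ (J • ⊤ : Submodule S (↥(J ^ n)))
      letI : Module (R' ⧸ (I ^ 1).map f) M := Module.compHom M ψ
      have hsm : ∀ x s (m : M), (Ideal.Quotient.mk ((I ^ 1).map f) x) • m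
          = (g' x ^ p + p * s) • m := fun x s m => by
        change ψ _ • m = _
        rw [hψ x s]
        rfl
      let e : R' →+ M :=
        { toFun := fun x => Submodule.Quotient.mk (⟨d x, ih x⟩ : ↥(J ^ n))
          map_zero' := by
            have h0 : d 0 = 0 := by simpa using hbase 0
            rw [Submodule.Quotient.mk_eq_zero]
            convert Submodule.zero_mem _
            exact h0
          map_add' := fun x y => by
            rw [← Submodule.Quotient.mk_add]
            congr 1
            exact Subtype.ext (hadd x y) }
      have he : ∀ x y, e (x * y) = (Ideal.Quotient.mk ((I ^ 1).map f) x) • e y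
          + (Ideal.Quotient.mk ((I ^ 1).map f) y) • e x := fun x y => by
        rw [hsm x (g' (DR'.δ x)), hsm y (DS.δ (g' y))]
        change (Submodule.Quotient.mk _ : M) = _ • Submodule.Quotient.mk _
          + _ • Submodule.Quotient.mk _
        rw [← Submodule.Quotient.mk_smul, ← Submodule.Quotient.mk_smul,
          ← Submodule.Quotient.mk_add]
        congr 1
        exact Subtype.ext (hmul x y)
      have he0 : ∀ r, e (f r) = 0 := fun r => by
        change (Submodule.Quotient.mk _ : M) = 0
        rw [Submodule.Quotient.mk_eq_zero]
        convert Submodule.zero_mem _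
        exact hbase r
      have hker : ∀ c ∈ (I ^ 1).map f, e c = 0 := fun c hc => by
        refine Submodule.span_induction (p := fun c _ => e c = 0) ?_ (map_zero e) ?_ ?_ hc
        · rintro _ ⟨r, -, rfl⟩
          exact he0 r
        · intro x y _ _ hx hy
          rw [map_add, hx, hy, add_zero]
        · intro a x hx h
          have hx' : Ideal.Quotient.mk ((I ^ 1).map f) x = 0 :=
            Ideal.Quotient.eq_zero_iff_mem.2 hx
          rw [smul_eq_mul, he, h, hx', smul_zero, zero_smul, add_zero]
      letI : Algebra (R ⧸ I ^ 1) (R' ⧸ (I ^ 1).map f) :=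
        (Ideal.quotientMap ((I ^ 1).map f) f Ideal.le_comap_map).toAlgebra
      haveI : Algebra.Etale (R ⧸ I ^ 1) (R' ⧸ (I ^ 1).map f) := hetale 1 one_pos
      have hz := der_zero_aux (B := R ⧸ I ^ 1) (Ideal.Quotient.mk ((I ^ 1).map f))
        Ideal.Quotient.mk_surjective e
        (fun c hc => hker c (Ideal.Quotient.eq_zero_iff_mem.1 hc)) he
        (fun b => by
          obtain ⟨r, rfl⟩ := Ideal.Quotient.mk_surjective b
          exact ⟨f r, rfl, he0 r⟩)
      intro x
      have h1 : (⟨d x, ih x⟩ : ↥(J ^ n)) ∈ (J • ⊤ : Submodule S (↥(J ^ n))) :=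
        (Submodule.Quotient.mk_eq_zero _).1 (hz x)
      have h2 := Submodule.mem_map_of_mem (f := (J ^ n).subtype) h1
      rw [Submodule.map_smul'', Submodule.map_subtype_top] at h2
      rw [pow_succ']
      exact h2
  intro x
  exact sub_eq_zero.1 (hsep _ fun n => main n x)
end

section
/- Let p be a prime, R a δ-ring, ξ ∈ R, A a δ-R-algebra, and T ∈ A. Let B = A[S_0,S_1,S_2,…] be the polynomial ring over A in countably many variables equipped with a δ-structure extending that of A and satisfying δ(S_n) = S_{n+1} for all n; write S = S_0, so δ^n(S) = S_n. For an integer n ≥ −1 let B_n be the A-subalgebra of B generated by S_0,…,S_n (with B_{−1} = A). Then for every positive integer n there exist c_0,…,c_{p−1} ∈ B_{n−2} such that δ^n(ξ·S − T) = φ^n(ξ)·S_n + (∑_{m=0}^{n−1} p^{m(p−1)})·φ^{n−1}(δ(ξ))·S_{n−1}^p + ∑_{ν=0}^{p−1} c_ν·S_{n−1}^ν, where φ denotes the Frobenius lift x ↦ x^p + p·δ(x). -/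
namespace DeltaAux

open MvPolynomial

lemma geom_id {R : Type*} [CommRing R] (p : ℕ) (hp : p.Prime) (m : ℕ) (u y : R) :
    (∑ j ∈ Finset.range m, (u + p * y) ^ j * u ^ (m - 1 - j)) * y =
      ∑ j ∈ Finset.range m, ((m.choose (j + 1) : ℕ) : R) * (p : R) ^ j * u ^ (m - 1 - j)
        * y ^ (j + 1) := by
  have key : (∑ j ∈ Finset.range m, ((X 0 : MvPolynomial (Fin 2) ℤ) +
        (p : MvPolynomial (Fin 2) ℤ) * X 1) ^ j
        * X 0 ^ (m - 1 - j)) * X 1 =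
      ∑ j ∈ Finset.range m, ((m.choose (j + 1) : ℕ) : MvPolynomial (Fin 2) ℤ)
        * (p : MvPolynomial (Fin 2) ℤ) ^ j
        * X 0 ^ (m - 1 - j) * X 1 ^ (j + 1) := by
    have hp0 : (p : MvPolynomial (Fin 2) ℤ) ≠ 0 := by
      exact_mod_cast hp.ne_zero
    apply mul_left_cancel₀ hp0
    have h1 := (Commute.all ((X 0 : MvPolynomial (Fin 2) ℤ) + (p : MvPolynomial (Fin 2) ℤ) * X 1) (X 0)).geom_sum₂_mul m
    have h2 := add_pow ((p : MvPolynomial (Fin 2) ℤ) * X 1) (X 0) m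
    rw [Finset.sum_range_succ'] at h2
    have h3 : (p : MvPolynomial (Fin 2) ℤ) * ∑ j ∈ Finset.range m,
        ((m.choose (j + 1) : ℕ) : MvPolynomial (Fin 2) ℤ)
        * (p : MvPolynomial (Fin 2) ℤ) ^ j
        * X 0 ^ (m - 1 - j) * X 1 ^ (j + 1) = ∑ k ∈ Finset.range m,
        ((p : MvPolynomial (Fin 2) ℤ) * X 1) ^ (k + 1) * X 0 ^ (m - (k + 1))
          * ((m.choose (k + 1) : ℕ) : MvPolynomial (Fin 2) ℤ) := by
      rw [Finset.mul_sum]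
      refine Finset.sum_congr rfl fun j _ => ?_
      rw [show m - (j + 1) = m - 1 - j by omega]
      ring
    rw [h3]
    simp only [pow_zero, Nat.sub_zero, Nat.choose_zero_right, Nat.cast_one, mul_one,
      one_mul] at h2
    rw [add_comm ((p : MvPolynomial (Fin 2) ℤ) * X 1) (X 0)] at h2
    linear_combination h1 + h2
  have := congrArg (MvPolynomial.aeval (R := ℤ) ![u, y]) key
  simpa using this

variable {p : ℕ} {R : Type*} [CommRing R]

lemma delta_pow_geom (D : DeltaStructure p R) (x : R) (m : ℕ) :
    D.δ (x ^ m) = (∑ j ∈ Finset.range m, (x ^ p + p * D.δ x) ^ j * (x ^ p) ^ (m - 1 - j))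
      * D.δ x := by
  induction m with
  | zero => simp [D.delta_one]
  | succ m ih =>
    rw [pow_succ', D.delta_mul, ih, Finset.sum_range_succ']
    have : ∑ k ∈ Finset.range m, (x ^ p + p * D.δ x) ^ (k + 1) * (x ^ p) ^ (m + 1 - 1 - (k + 1))
        = (x ^ p + p * D.δ x) * ∑ k ∈ Finset.range m,
          (x ^ p + p * D.δ x) ^ k * (x ^ p) ^ (m - 1 - k) := by
      rw [Finset.mul_sum]
      refine Finset.sum_congr rfl fun j _ => ?_
      rw [show m + 1 - 1 - (j + 1) = m - 1 - j by omega]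
      ring
    rw [this]
    simp only [pow_zero, Nat.sub_zero, Nat.add_sub_cancel]
    ring

lemma delta_pow (hp : p.Prime) (D : DeltaStructure p R) (x : R) (m : ℕ) :
    D.δ (x ^ m) = ∑ j ∈ Finset.range m, ((m.choose (j + 1) : ℕ) : R) * (p : R) ^ j
      * (x ^ p) ^ (m - 1 - j) * D.δ x ^ (j + 1) := by
  rw [delta_pow_geom, geom_id p hp]

lemma p_mul_div (hp : p.Prime) {i : ℕ} (hi : i ∈ Finset.Ioo 0 p) :
    (p : R) * ((p.choose i / p : ℕ) : R) = (p.choose i : ℕ) := by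
  rw [Finset.mem_Ioo] at hi
  rw [← Nat.cast_mul, Nat.mul_div_cancel' (hp.dvd_choose_self (by omega) hi.2)]

lemma sum_split (hp : p.Prime) (f : ℕ → R) :
    ∑ i ∈ Finset.range (p + 1), f i = f 0 + ∑ i ∈ Finset.Ioo 0 p, f i + f p := by
  have h : Finset.range p = insert 0 (Finset.Ioo 0 p) := by
    ext i
    have := hp.pos
    simp only [Finset.mem_range, Finset.mem_insert, Finset.mem_Ioo]
    omega
  rw [Finset.sum_range_succ, h, Finset.sum_insert (by simp)]

lemma add_pow_p (hp : p.Prime) (x y : R) :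
    (x + y) ^ p = x ^ p + y ^ p + (p : R) *
      ∑ i ∈ Finset.Ioo 0 p, ((p.choose i / p : ℕ) : R) * x ^ i * y ^ (p - i) := by
  rw [add_pow, sum_split hp, Finset.mul_sum]
  have : ∑ i ∈ Finset.Ioo 0 p, x ^ i * y ^ (p - i) * ((p.choose i : ℕ) : R) =
      ∑ i ∈ Finset.Ioo 0 p, (p : R) * (((p.choose i / p : ℕ) : R) * x ^ i * y ^ (p - i)) := by
    refine Finset.sum_congr rfl fun i hi => ?_
    rw [← p_mul_div hp hi]; ring
  rw [this]
  simp
  ring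

/-- The Frobenius lift as a ring homomorphism. -/
def phi (hp : p.Prime) (D : DeltaStructure p R) : R →+* R where
  toFun r := r ^ p + (p : R) * D.δ r
  map_zero' := by simp [D.delta_zero, hp.ne_zero]
  map_one' := by simp [D.delta_one]
  map_add' x y := by
    rw [D.delta_add, add_pow_p hp]; ring
  map_mul' x y := by
    rw [D.delta_mul]; ring

lemma phi_apply (hp : p.Prime) (D : DeltaStructure p R) (x : R) :
    phi hp D x = x ^ p + (p : R) * D.δ x := rfl

lemma delta_natCast (hp : p.Prime) (D : DeltaStructure p R) (n : ℕ) :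
    ∃ e : ℤ, (p : ℤ) * e = n - n ^ p ∧ D.δ (n : R) = e := by
  induction n with
  | zero => exact ⟨0, by simp [hp.ne_zero], by simp [D.delta_zero]⟩
  | succ n ih =>
    obtain ⟨e, he, h⟩ := ih
    refine ⟨e - ∑ i ∈ Finset.Ioo 0 p, ((p.choose i / p : ℕ) : ℤ) * (n : ℤ) ^ i * 1 ^ (p - i),
      ?_, ?_⟩
    · have := add_pow_p hp (n : ℤ) 1
      push_cast
      push_cast at this
      rw [this, mul_sub, he]; simp only [one_pow]; ring
    · rw [Nat.cast_succ, D.delta_add, h, D.delta_one]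
      simp only [Int.cast_sub, Int.cast_sum, Int.cast_mul, Int.cast_pow, Int.cast_natCast,
        Int.cast_one, add_zero]

lemma delta_p (hp : p.Prime) (D : DeltaStructure p R) :
    D.δ (p : R) = 1 - (p : R) ^ (p - 1) := by
  obtain ⟨e, he, h⟩ := delta_natCast hp D p
  have : e = 1 - (p : ℤ) ^ (p - 1) := by
    have hp0 : (p : ℤ) ≠ 0 := by exact_mod_cast hp.ne_zero
    apply mul_left_cancel₀ hp0
    rw [he, mul_sub, mul_one, mul_pow_sub_one hp.ne_zero]
  rw [h, this]; push_cast; rfl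

lemma delta_pow_p (hp : p.Prime) (D : DeltaStructure p R) (x : R) :
    D.δ (x ^ p) = (p : R) ^ (p - 1) * D.δ x ^ p + ∑ j ∈ Finset.range (p - 1),
      ((p.choose (j + 1) : ℕ) : R) * (p : R) ^ j
      * (x ^ p) ^ (p - 1 - j) * D.δ x ^ (j + 1) := by
  rw [delta_pow hp]
  conv_lhs => rw [show Finset.range p = Finset.range (p - 1 + 1) by
    rw [Nat.sub_add_cancel hp.one_le]]
  rw [Finset.sum_range_succ, Nat.sub_add_cancel hp.one_le]
  simp
  ring

lemma delta_phi (hp : p.Prime) (D : DeltaStructure p R) (x : R) :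
    D.δ (phi hp D x) = phi hp D (D.δ x) := by
  rw [phi_apply, phi_apply, add_comm (x ^ p), D.delta_add, D.delta_mul, delta_pow_p hp, delta_p hp]
  have : ∑ i ∈ Finset.Ioo 0 p, ((p.choose i / p : ℕ) : R) * ((p : R) * D.δ x) ^ i
      * (x ^ p) ^ (p - i) = ∑ j ∈ Finset.range (p - 1),
      ((p.choose (j + 1) : ℕ) : R) * (p : R) ^ j
      * (x ^ p) ^ (p - 1 - j) * D.δ x ^ (j + 1) := by
    have h : Finset.Ioo 0 p = Finset.Ico (0 + 1) (p - 1 + 1) := by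
      ext i
      have := hp.pos
      simp only [Finset.mem_Ico, Finset.mem_Ioo]
      omega
    rw [h, ← Finset.sum_Ico_add', Finset.range_eq_Ico]
    refine Finset.sum_congr rfl fun j hj => ?_
    rw [Finset.mem_Ico] at hj
    rw [← p_mul_div hp (Finset.mem_Ioo.2 ⟨Nat.succ_pos j, by omega⟩),
      show p - (j + 1) = p - 1 - j by omega]
    ring
  rw [this]
  have h2 : (p : R) ^ p = p * p ^ (p - 1) := (mul_pow_sub_one hp.ne_zero _).symm
  rw [h2]
  ring

lemma delta_phi_iter (hp : p.Prime) (D : DeltaStructure p R) (n : ℕ) (x : R) :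
    D.δ ((phi hp D)^[n] x) = (phi hp D)^[n] (D.δ x) :=
  (Function.Commute.iterate_right (f := D.δ) (g := phi hp D) (delta_phi hp D) n) x

/-- The subalgebra generated by `X 0, …, X (n-1)`. -/
noncomputable abbrev Bk (A : Type*) [CommRing A] (n : ℕ) : Subalgebra A (MvPolynomial ℕ A) :=
  Algebra.adjoin A {x : MvPolynomial ℕ A | ∃ m : ℕ, m < n ∧ x = X m}

/-- Polynomials in `X n` of degree `< p` with coefficients in `Bk n`. -/
noncomputable def Low (A : Type*) [CommRing A] (p n : ℕ) : Submodule (Bk A n) (MvPolynomial ℕ A) :=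
  Submodule.span (Bk A n) (Set.range fun ν : Fin p => (X n : MvPolynomial ℕ A) ^ (ν : ℕ))

section
variable {A : Type*} [CommRing A]

lemma Bk_X {m n : ℕ} (h : m < n) : (X m : MvPolynomial ℕ A) ∈ Bk A n :=
  Algebra.subset_adjoin ⟨m, h, rfl⟩

lemma Bk_C (n : ℕ) (a : A) : (C a : MvPolynomial ℕ A) ∈ Bk A n :=
  (Bk A n).algebraMap_mem a

lemma Bk_mono {m n : ℕ} (h : m ≤ n) : Bk A m ≤ Bk A n := by
  apply Algebra.adjoin_mono
  rintro x ⟨k, hk, rfl⟩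
  exact ⟨k, by omega, rfl⟩

lemma Low_mul {n ν : ℕ} (h : ν < p) {b : MvPolynomial ℕ A} (hb : b ∈ Bk A n) :
    b * X n ^ ν ∈ Low A p n :=
  (Low A p n).smul_mem ⟨b, hb⟩ (Submodule.subset_span ⟨⟨ν, h⟩, rfl⟩)

lemma Low_of_Bk (hp : p.Prime) {n : ℕ} {b : MvPolynomial ℕ A} (hb : b ∈ Bk A n) :
    b ∈ Low A p n := by
  simpa using Low_mul hp.pos hb

lemma Low_exists {n : ℕ} {q : MvPolynomial ℕ A} (hq : q ∈ Low A p n) :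
    ∃ c : ℕ → MvPolynomial ℕ A, (∀ ν, c ν ∈ Bk A n) ∧
      q = ∑ ν ∈ Finset.range p, c ν * X n ^ ν := by
  obtain ⟨c, hc⟩ := (Submodule.mem_span_range_iff_exists_fun _).1 hq
  refine ⟨fun ν => if h : ν < p then (c ⟨ν, h⟩ : MvPolynomial ℕ A) else 0, ?_, ?_⟩
  · intro ν
    dsimp only
    split_ifs
    · exact (c _).2
    · exact zero_mem _
  · rw [← hc, Finset.sum_range]
    refine Finset.sum_congr rfl fun i _ => ?_
    simp [Subalgebra.smul_def]

variable {DA : DeltaStructure p A} {DB : DeltaStructure p (MvPolynomial ℕ A)}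

lemma cross_mem {n : ℕ} {x y : MvPolynomial ℕ A} (hx : x ∈ Bk A n) (hy : y ∈ Bk A n) :
    ∑ i ∈ Finset.Ioo 0 p, ((p.choose i / p : ℕ) : MvPolynomial ℕ A) * x ^ i * y ^ (p - i)
      ∈ Bk A n :=
  sum_mem fun _ _ => mul_mem (mul_mem (natCast_mem _ _) (pow_mem hx _)) (pow_mem hy _)

lemma delta_Bk (hBC : ∀ a : A, DB.δ (C a) = C (DA.δ a)) (hBX : ∀ n : ℕ, DB.δ (X n) = X (n + 1))
    {n : ℕ} {b : MvPolynomial ℕ A} (hb : b ∈ Bk A n) : DB.δ b ∈ Bk A (n + 1) := by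
  have hle := Bk_mono (A := A) (Nat.le_succ n)
  induction hb using Algebra.adjoin_induction with
  | mem x hx =>
    obtain ⟨m, hm, rfl⟩ := hx
    rw [hBX]; exact Bk_X (by omega)
  | algebraMap r =>
    rw [MvPolynomial.algebraMap_eq, hBC]; exact Bk_C _ _
  | add x y hx hy ihx ihy =>
    rw [DB.delta_add]
    exact sub_mem (add_mem ihx ihy) (cross_mem (hle hx) (hle hy))
  | mul x y hx hy ihx ihy =>
    rw [DB.delta_mul]
    have hx := hle hx
    have hy := hle hy
    exact add_mem (add_mem (mul_mem ihx (pow_mem hy _)) (mul_mem (pow_mem hx _) ihy))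
      (mul_mem (mul_mem (natCast_mem _ _) ihx) ihy)

/-- `δ(c X_k^ν)` for `ν < p`. -/
lemma delta_term (hp : p.Prime) (hBC : ∀ a : A, DB.δ (C a) = C (DA.δ a))
    (hBX : ∀ n : ℕ, DB.δ (X n) = X (n + 1))
    {k ν : ℕ} (hν : ν < p) {c : MvPolynomial ℕ A} (hc : c ∈ Bk A k) :
    DB.δ (c * X k ^ ν) ∈ Low A p (k + 1) := by
  have hd := delta_Bk hBC hBX hc
  have hc' := Bk_mono (A := A) (Nat.le_succ k) hc
  have hX : (X k : MvPolynomial ℕ A) ∈ Bk A (k + 1) := Bk_X (by omega)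
  have e : DB.δ (c * X k ^ ν) = DB.δ c * (X k ^ ν) ^ p + (phi hp DB c) * DB.δ (X k ^ ν) := by
    rw [DB.delta_mul, phi_apply]; ring
  rw [e, delta_pow hp, hBX, Finset.mul_sum]
  refine add_mem (Low_of_Bk hp (mul_mem hd (pow_mem (pow_mem hX _) _))) (sum_mem fun j hj => ?_)
  rw [Finset.mem_range] at hj
  rw [← mul_assoc]
  refine Low_mul (by omega) (mul_mem ?_ (mul_mem (mul_mem (natCast_mem _ _)
    (pow_mem (natCast_mem _ _) _)) (pow_mem (pow_mem hX _) _)))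
  rw [phi_apply]
  exact add_mem (pow_mem hc' _) (mul_mem (natCast_mem _ _) hd)

lemma delta_top (hp : p.Prime) (hBC : ∀ a : A, DB.δ (C a) = C (DA.δ a))
    (hBX : ∀ n : ℕ, DB.δ (X n) = X (n + 1)) (k : ℕ) (a : A) :
    DB.δ (C a * X k ^ p) - C (p ^ (p - 1) * phi hp DA a) * X (k + 1) ^ p ∈ Low A p (k + 1) := by
  have hX : (X k : MvPolynomial ℕ A) ∈ Bk A (k + 1) := Bk_X (by omega)
  have e : DB.δ (C a * X k ^ p) = C (DA.δ a) * (X k ^ p) ^ p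
      + C (phi hp DA a) * DB.δ (X k ^ p) := by
    rw [DB.delta_mul, phi_apply, hBC]; simp only [map_add, map_mul, map_pow, map_natCast]; ring
  rw [e, delta_pow_p hp, hBX, mul_add, Finset.mul_sum]
  have : ∀ u v w z : MvPolynomial ℕ A, v = z → u + (v + w) - z = u + w := by
    intro u v w z h; rw [h]; ring
  rw [this]
  · refine add_mem (Low_of_Bk hp (mul_mem (Bk_C _ _) (pow_mem (pow_mem hX _) _)))
      (sum_mem fun j hj => ?_)
    rw [Finset.mem_range] at hj
    rw [← mul_assoc]
    exact Low_mul (by omega) (mul_mem (Bk_C _ _) (mul_mem (mul_mem (natCast_mem _ _)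
      (pow_mem (natCast_mem _ _) _)) (pow_mem (pow_mem hX _) _)))
  · simp only [map_mul, map_pow, map_natCast]; ring

lemma delta_Low (hp : p.Prime) (hBC : ∀ a : A, DB.δ (C a) = C (DA.δ a))
    (hBX : ∀ n : ℕ, DB.δ (X n) = X (n + 1)) {k : ℕ} {q : MvPolynomial ℕ A}
    (hq : q ∈ Low A p k) : q ∈ Bk A (k + 1) ∧ DB.δ q ∈ Low A p (k + 1) := by
  obtain ⟨c, hc, rfl⟩ := Low_exists hq
  have : ∀ s : Finset ℕ, (∀ i ∈ s, i < p) → ∑ ν ∈ s, c ν * X k ^ ν ∈ Bk A (k + 1) ∧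
      DB.δ (∑ ν ∈ s, c ν * X k ^ ν) ∈ Low A p (k + 1) := by
    intro s
    induction s using Finset.induction_on with
    | empty => intro _; simp [DB.delta_zero]
    | insert a s ha ih =>
      intro h
      obtain ⟨h1, h2⟩ := ih fun i hi => h i (Finset.mem_insert_of_mem hi)
      have h3 : c a * X k ^ a ∈ Bk A (k + 1) :=
        mul_mem (Bk_mono (Nat.le_succ k) (hc a)) (pow_mem (Bk_X (by omega)) _)
      rw [Finset.sum_insert ha]
      refine ⟨add_mem h3 h1, ?_⟩
      rw [DB.delta_add]
      exact sub_mem (add_mem (delta_term hp hBC hBX (h a (Finset.mem_insert_self _ _)) (hc a)) h2)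
        (Low_of_Bk hp (cross_mem h3 h1))
  exact this _ fun i hi => Finset.mem_range.1 hi

lemma delta_lead (hp : p.Prime) (hBC : ∀ a : A, DB.δ (C a) = C (DA.δ a))
    (hBX : ∀ n : ℕ, DB.δ (X n) = X (n + 1)) {n : ℕ} (a : A) {q : MvPolynomial ℕ A}
    (hq : q ∈ Bk A n) : ∃ r ∈ Low A p n, DB.δ (C a * X n + q) =
      C (phi hp DA a) * X (n + 1) + C (DA.δ a) * X n ^ p + DB.δ q + r := by
  refine ⟨-∑ i ∈ Finset.Ioo 0 p, ((p.choose i / p : ℕ) : MvPolynomial ℕ A) *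
    (C a * X n) ^ i * q ^ (p - i), neg_mem (sum_mem fun i hi => ?_), ?_⟩
  · rw [Finset.mem_Ioo] at hi
    have : ((p.choose i / p : ℕ) : MvPolynomial ℕ A) * (C a * X n) ^ i * q ^ (p - i) =
      (((p.choose i / p : ℕ) : MvPolynomial ℕ A) * C a ^ i * q ^ (p - i)) * X n ^ i := by ring
    rw [this]
    exact Low_mul hi.2 (mul_mem (mul_mem (natCast_mem _ _) (pow_mem (Bk_C _ _) _)) (pow_mem hq _))
  · rw [DB.delta_add, DB.delta_mul, hBC, hBX, phi_apply]
    simp only [map_add, map_mul, map_pow, map_natCast]; ring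

end

end DeltaAux

open MvPolynomial in
/-- Iteration lemma: with `B = A[S_0, S_1, …]` (a polynomial ring over the δ-`R`-algebra
`A` with `δ(S_n) = S_{n+1}`) and `B_k` the `A`-subalgebra generated by `S_0, …, S_k`, for
every `n ≥ 1` one has
`δ^n(ξ·S − T) = φ^n(ξ)·S_n + (∑_{m=0}^{n−1} p^{m(p−1)})·φ^{n−1}(δ(ξ))·S_{n−1}^p
  + ∑_{ν=0}^{p−1} c_ν·S_{n−1}^ν` with `c_ν ∈ B_{n−2}`. -/
theorem delta_iteration (p : ℕ) (hp : p.Prime) (R A : Type*) [CommRing R] [CommRing A]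
    [Algebra R A] (DR : DeltaStructure p R) (DA : DeltaStructure p A)
    (halg : ∀ r : R, DA.δ (algebraMap R A r) = algebraMap R A (DR.δ r))
    (ξ : R) (T : A)
    (DB : DeltaStructure p (MvPolynomial ℕ A))
    (hBC : ∀ a : A, DB.δ (C a) = C (DA.δ a))
    (hBX : ∀ n : ℕ, DB.δ (X n) = X (n + 1))
    (n : ℕ) (hn : 0 < n) :
    ∃ c : ℕ → MvPolynomial ℕ A,
      (∀ ν : ℕ, ν < p →
        c ν ∈ Algebra.adjoin A {x : MvPolynomial ℕ A | ∃ m : ℕ, m < n - 1 ∧ x = X m}) ∧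
      DB.δ^[n] (C (algebraMap R A ξ) * X 0 - C T)
        = C (algebraMap R A ((fun r : R => r ^ p + (p : R) * DR.δ r)^[n] ξ)) * X n
          + C (algebraMap R A
              ((∑ m ∈ Finset.range n, (p : R) ^ (m * (p - 1))) *
                (fun r : R => r ^ p + (p : R) * DR.δ r)^[n - 1] (DR.δ ξ)))
            * X (n - 1) ^ p
          + ∑ ν ∈ Finset.range p, c ν * X (n - 1) ^ ν := by
  obtain ⟨k, rfl⟩ : ∃ k, n = k + 1 := ⟨n - 1, by omega⟩
  clear hn
  simp only [Nat.add_sub_cancel]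
  have hphiA : ∀ r, DeltaAux.phi hp DA (algebraMap R A r)
      = algebraMap R A (DeltaAux.phi hp DR r) := by
    intro r
    simp [DeltaAux.phi_apply, halg]
  change ∃ c : ℕ → MvPolynomial ℕ A, (∀ ν : ℕ, ν < p → c ν ∈ DeltaAux.Bk A k) ∧
      DB.δ^[k + 1] (C (algebraMap R A ξ) * X 0 - C T)
        = C (algebraMap R A ((DeltaAux.phi hp DR)^[k + 1] ξ)) * X (k + 1)
          + C (algebraMap R A ((∑ m ∈ Finset.range (k + 1), (p : R) ^ (m * (p - 1))) *
                (DeltaAux.phi hp DR)^[k] (DR.δ ξ))) * X k ^ p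
          + ∑ ν ∈ Finset.range p, c ν * X k ^ ν
  suffices H : ∃ q ∈ DeltaAux.Low A p k,
      DB.δ^[k + 1] (C (algebraMap R A ξ) * X 0 - C T)
        = C (algebraMap R A ((DeltaAux.phi hp DR)^[k + 1] ξ)) * X (k + 1)
          + C (algebraMap R A ((∑ m ∈ Finset.range (k + 1), (p : R) ^ (m * (p - 1))) *
                (DeltaAux.phi hp DR)^[k] (DR.δ ξ))) * X k ^ p + q by
    obtain ⟨q, hq, h⟩ := H
    obtain ⟨c, hc, rfl⟩ := DeltaAux.Low_exists hq
    exact ⟨c, fun ν _ => hc ν, h⟩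
  induction k with
  | zero =>
    obtain ⟨r, hr, h⟩ := DeltaAux.delta_lead hp hBC hBX (n := 0) (algebraMap R A ξ)
      (DeltaAux.Bk_C 0 (-T))
    refine ⟨DB.δ (C (-T)) + r, add_mem ?_ hr, ?_⟩
    · rw [hBC]; exact DeltaAux.Low_of_Bk hp (DeltaAux.Bk_C _ _)
    · rw [hphiA, halg] at h
      rw [sub_eq_add_neg, ← map_neg C T]
      simp only [zero_add, Function.iterate_one, Function.iterate_zero, id, Finset.sum_range_one,
        zero_mul, pow_zero, one_mul] at h ⊢
      rw [h]; ring
  | succ k ih =>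
    obtain ⟨q, hq, h⟩ := ih
    rw [Function.iterate_succ_apply', h]
    set b : R := (∑ m ∈ Finset.range (k + 1), (p : R) ^ (m * (p - 1))) *
                (DeltaAux.phi hp DR)^[k] (DR.δ ξ) with hb
    obtain ⟨hq1, hq2⟩ := DeltaAux.delta_Low hp hBC hBX hq
    have hbX : C (algebraMap R A b) * X k ^ p ∈ DeltaAux.Bk A (k + 1) :=
      mul_mem (DeltaAux.Bk_C _ _) (pow_mem (DeltaAux.Bk_X (by omega)) _)
    obtain ⟨r, hr, h'⟩ := DeltaAux.delta_lead hp hBC hBX (n := k + 1)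
      (algebraMap R A ((DeltaAux.phi hp DR)^[k + 1] ξ)) (add_mem hbX hq1)
    have ht := DeltaAux.delta_top (DB := DB) hp hBC hBX k (algebraMap R A b)
    rw [hphiA] at ht
    have hx := DeltaAux.Low_of_Bk hp (DeltaAux.cross_mem (p := p) hbX hq1)
    refine ⟨_, add_mem (sub_mem (add_mem ht hq2) hx) hr, ?_⟩
    rw [add_assoc, h', DB.delta_add, hphiA, halg, DeltaAux.delta_phi_iter,
      Function.iterate_succ_apply' _ (k + 1) ξ]
    have hcoef : (∑ m ∈ Finset.range (k + 1 + 1), (p : R) ^ (m * (p - 1))) *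
                (DeltaAux.phi hp DR)^[k + 1] (DR.δ ξ) =
        (DeltaAux.phi hp DR)^[k + 1] (DR.δ ξ) + (p : R) ^ (p - 1) * DeltaAux.phi hp DR b := by
      rw [hb, map_mul, ← Function.iterate_succ_apply' (DeltaAux.phi hp DR) k, Finset.sum_range_succ', map_sum]
      simp only [map_pow, map_natCast, zero_mul, pow_zero, add_mul, one_mul, pow_add]
      rw [← Finset.sum_mul]
      ring
    rw [hcoef]
    simp only [map_add, map_mul, map_pow, map_natCast]
    ring
end

section
/- Let p be a prime and let R be a δ-ring which is an algebra over ℤ localized at (p) (so in particular 1 − p^{p−1} is a unit of R). Let t_1, t_2, t_3, τ_{12}, τ_{13} ∈ R satisfy δ(t_i) = 0 for i = 1,2,3, p·τ_{12} = t_2 − t_1, and p·τ_{13} = t_3 − t_1; set τ_{23} = τ_{13} − τ_{12}. For (i,j) ∈ {(1,2),(1,3),(2,3)} define σ_{ij} = (1 − p^{p−1})^{−1}·(−δ(τ_{ij}) + ∑_{ν=1}^{p−1} (1/p)·C(p,ν)·t_i^{p−ν}·p^{ν−1}·τ_{ij}^ν). Then σ_{23} = σ_{13} + (−1)^p·σ_{12}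 + ∑_{ν=1}^{p−1} (1/p)·C(p,ν)·τ_{13}^ν·(−τ_{12})^{p−ν}. -/
namespace SigmaAux

def S (p : ℕ) {R : Type*} [CommRing R] (x y : R) : R :=
  ∑ i ∈ Finset.Ioo 0 p, ((p.choose i / p : ℕ) : R) * x ^ i * y ^ (p - i)

def G (p : ℕ) {R : Type*} [CommRing R] (t x : R) : R :=
  ∑ ν ∈ Finset.Ioo 0 p, ((p.choose ν / p : ℕ) : R) * t ^ (p - ν) * (p : R) ^ (ν - 1) * x ^ ν

lemma map_S (p : ℕ) {A B : Type*} [CommRing A] [CommRing B] (f : A →+* B) (x y : A) :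
    f (S p x y) = S p (f x) (f y) := by
  simp [S]

lemma map_G (p : ℕ) {A B : Type*} [CommRing A] [CommRing B] (f : A →+* B) (x y : A) :
    f (G p x y) = G p (f x) (f y) := by
  simp [G]

lemma p_mul_S {p : ℕ} (hp : p.Prime) {R : Type*} [CommRing R] (x y : R) :
    (p : R) * S p x y = (x + y) ^ p - x ^ p - y ^ p := by
  have hI : Finset.Ioo 0 p = Finset.Ico 1 p := by ext; simp [Nat.succ_le_iff]
  rw [add_pow, Finset.sum_range_succ, Finset.range_eq_Ico,
    Finset.sum_eq_sum_Ico_succ_bot hp.pos, S, hI, Finset.mul_sum]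
  have : ∀ i ∈ Finset.Ico 1 p, (p : R) * (((p.choose i / p : ℕ) : R) * x ^ i * y ^ (p - i)) =
      x ^ i * y ^ (p - i) * (p.choose i : R) := by
    intro i hi
    have hi := Finset.mem_Ico.1 hi
    have hd : p * (p.choose i / p) = p.choose i :=
      Nat.mul_div_cancel' (hp.dvd_choose_self (by omega) hi.2)
    have hd' : (p : R) * ((p.choose i / p : ℕ) : R) = (p.choose i : R) := by
      exact_mod_cast congrArg (Nat.cast : ℕ → R) hd
    rw [← hd']; ring
  rw [Finset.sum_congr rfl this]
  simp

lemma p_mul_G {p : ℕ} {R : Type*} [CommRing R] (t x : R) :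
    (p : R) * G p t x = S p ((p : R) * x) t := by
  unfold G S
  rw [Finset.mul_sum]
  refine Finset.sum_congr rfl fun i hi => ?_
  obtain ⟨k, rfl⟩ : ∃ k, i = k + 1 := ⟨i - 1, by have := Finset.mem_Ioo.1 hi; omega⟩
  simp only [Nat.add_sub_cancel]
  ring

lemma key_dom {p : ℕ} (hp : p.Prime) (hodd : Odd p) {A : Type*} [CommRing A] [IsDomain A]
    [CharZero A] (t x y : A) :
    G p (t + p * x) (y - x) = G p t y - G p t x - (p : A) ^ (p - 1) * S p y (-x) := by
  have hp0 : (p : A) ≠ 0 := Nat.cast_ne_zero.2 hp.ne_zero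
  apply mul_left_cancel₀ hp0
  apply mul_left_cancel₀ hp0
  have e1 := p_mul_S hp ((p : A) * (y - x)) (t + p * x)
  have e2 := p_mul_S hp ((p : A) * y) t
  have e3 := p_mul_S hp ((p : A) * x) t
  have e4 := p_mul_S hp y (-x)
  rw [← p_mul_G] at e1 e2 e3
  rw [hodd.neg_pow] at e4
  have e5 : (p : A) * (p : A) ^ (p - 1) = (p : A) ^ p := mul_pow_sub_one hp.ne_zero _
  have e6 : (p : A) * (y - x) + (t + p * x) = p * y + t := by ring
  have e7 : y + -x = y - x := by ring
  have e8 : t + p * x = p * x + t := by ring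
  rw [e6] at e1
  rw [e7] at e4
  rw [e8] at e1 ⊢
  rw [mul_pow] at e1 e2 e3
  linear_combination e1 - e2 + e3 + (p : A) ^ p * e4 + p * S p y (-x) * e5

lemma key {p : ℕ} (hp : p.Prime) (hodd : Odd p) {R : Type*} [CommRing R] (t x y : R) :
    G p (t + p * x) (y - x) = G p t y - G p t x - (p : R) ^ (p - 1) * S p y (-x) := by
  have h := congrArg (MvPolynomial.eval₂Hom (Int.castRingHom R) ![t, x, y])
    (key_dom hp hodd (MvPolynomial.X 0 : MvPolynomial (Fin 3) ℤ) (MvPolynomial.X 1)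
      (MvPolynomial.X 2))
  simpa [map_S, map_G, -MvPolynomial.coe_eval₂Hom, -Polynomial.coe_eval₂RingHom, MvPolynomial.eval₂Hom_X'] using h

lemma S_neg {p : ℕ} (hp : p.Prime) (hodd : Odd p) {R : Type*} [CommRing R] (x : R) :
    S p x (-x) = 0 := by
  have h0 : S p (Polynomial.X : Polynomial ℤ) (-Polynomial.X) = 0 := by
    have hp0 : (p : Polynomial ℤ) ≠ 0 := Nat.cast_ne_zero.2 hp.ne_zero
    apply mul_left_cancel₀ hp0
    rw [p_mul_S hp, hodd.neg_pow]
    simp [hp.ne_zero]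
  have h := congrArg (Polynomial.eval₂RingHom (Int.castRingHom R) x) h0
  rw [map_S, map_neg, map_zero, Polynomial.coe_eval₂RingHom, Polynomial.eval₂_X] at h
  exact h

end SigmaAux

/-- Cocycle relation for the divided powers `σ_{ij}`.  Here `R` is a δ-ring which is a
`ℤ_{(p)}`-algebra (every integer prime to `p` is invertible in `R`; in particular
`1 − p^{p−1}` is a unit, so each `σ_{ij}` is characterized by its defining equation
`(1 − p^{p−1})·σ_{ij} = −δ(τ_{ij}) + ∑_{ν=1}^{p−1} (1/p)·C(p,ν)·t_i^{p−ν}·p^{ν−1}·τ_{ij}^ν`).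
Then `σ_{23} = σ_{13} + (−1)^p·σ_{12} + ∑_{ν=1}^{p−1} (1/p)·C(p,ν)·τ_{13}^ν·(−τ_{12})^{p−ν}`. -/
theorem sigma_cocycle (p : ℕ) (hp : p.Prime) (R : Type*) [CommRing R]
    (D : DeltaStructure p R)
    (hZp : ∀ n : ℤ, ¬ (p : ℤ) ∣ n → IsUnit (n : R))
    (t₁ t₂ t₃ τ₁₂ τ₁₃ : R)
    (ht₁ : D.δ t₁ = 0) (ht₂ : D.δ t₂ = 0) (ht₃ : D.δ t₃ = 0)
    (h₁₂ : (p : R) * τ₁₂ = t₂ - t₁) (h₁₃ : (p : R) * τ₁₃ = t₃ - t₁)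
    (σ₁₂ σ₁₃ σ₂₃ : R)
    (hσ₁₂ : (1 - (p : R) ^ (p - 1)) * σ₁₂ =
      -D.δ τ₁₂ + ∑ ν ∈ Finset.Ioo 0 p,
        ((p.choose ν / p : ℕ) : R) * t₁ ^ (p - ν) * (p : R) ^ (ν - 1) * τ₁₂ ^ ν)
    (hσ₁₃ : (1 - (p : R) ^ (p - 1)) * σ₁₃ =
      -D.δ τ₁₃ + ∑ ν ∈ Finset.Ioo 0 p,
        ((p.choose ν / p : ℕ) : R) * t₁ ^ (p - ν) * (p : R) ^ (ν - 1) * τ₁₃ ^ ν)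
    (hσ₂₃ : (1 - (p : R) ^ (p - 1)) * σ₂₃ =
      -D.δ (τ₁₃ - τ₁₂) + ∑ ν ∈ Finset.Ioo 0 p,
        ((p.choose ν / p : ℕ) : R) * t₂ ^ (p - ν) * (p : R) ^ (ν - 1) * (τ₁₃ - τ₁₂) ^ ν) :
    σ₂₃ = σ₁₃ + (-1 : R) ^ p * σ₁₂ +
      ∑ ν ∈ Finset.Ioo 0 p,
        ((p.choose ν / p : ℕ) : R) * τ₁₃ ^ ν * (-τ₁₂) ^ (p - ν) := by
  have hu : IsUnit (1 - (p : R) ^ (p - 1)) := by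
    have h := hZp (1 - (p : ℤ) ^ (p - 1)) (by
      intro h
      have h2 : (p : ℤ) ∣ (p : ℤ) ^ (p - 1) :=
        dvd_pow_self _ (by have := hp.two_le; omega)
      have h3 : (p : ℤ) ∣ 1 := by simpa using dvd_add h h2
      have h4 : p ∣ 1 := by exact_mod_cast h3
      exact hp.one_lt.ne' (Nat.dvd_one.1 h4))
    simpa using h
  apply hu.mul_left_cancel
  have hadd : ∀ x y : R, D.δ (x + y) = D.δ x + D.δ y - SigmaAux.S p x y := D.delta_add
  change _ = -D.δ τ₁₂ + SigmaAux.G p t₁ τ₁₂ at hσ₁₂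
  change _ = -D.δ τ₁₃ + SigmaAux.G p t₁ τ₁₃ at hσ₁₃
  change _ = -D.δ (τ₁₃ - τ₁₂) + SigmaAux.G p t₂ (τ₁₃ - τ₁₂) at hσ₂₃
  change _ = _ * (_ + SigmaAux.S p τ₁₃ (-τ₁₂))
  have ht : t₂ = t₁ + p * τ₁₂ := by rw [h₁₂]; ring
  have hneg := hadd τ₁₂ (-τ₁₂)
  rw [add_neg_cancel, D.delta_zero] at hneg
  have hsub := hadd τ₁₃ (-τ₁₂)
  rw [← sub_eq_add_neg] at hsub
  rcases hp.eq_two_or_odd' with h2 | hodd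
  · subst h2
    have hI : Finset.Ioo 0 2 = {1} := by decide
    have hS : ∀ x y : R, SigmaAux.S 2 x y = x * y := by
      intro x y; simp [SigmaAux.S, hI]
    have hG : ∀ x y : R, SigmaAux.G 2 x y = x * y := by
      intro x y; simp [SigmaAux.G, hI]
    have hd : D.δ (τ₁₂ + τ₁₂) = _ := hadd τ₁₂ τ₁₂
    have hd2 := hadd t₁ (τ₁₂ + τ₁₂)
    have ht' : t₁ + (τ₁₂ + τ₁₂) = t₂ := by rw [ht]; push_cast; ring
    rw [ht', ht₁, ht₂, hd] at hd2
    simp only [hS, hG] at *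
    rw [hsub] at hσ₂₃
    rw [ht] at hσ₂₃
    push_cast at *
    linear_combination hσ₂₃ - hσ₁₃ - hσ₁₂ + hneg - hd2
  · rw [SigmaAux.S_neg hp hodd] at hneg
    have hk := SigmaAux.key hp hodd t₁ τ₁₂ τ₁₃
    rw [← ht] at hk
    rw [hodd.neg_one_pow]
    linear_combination hσ₂₃ - hσ₁₃ + hσ₁₂ + hk - hsub + hneg
end

section
/- Let A be a commutative ring, 𝔞 a finitely generated ideal of A, and (M_n)_{n≥1} an inverse system of A-modules such that 𝔞^n·M_n = 0 and the transition map M_{n+1} → M_n induces an isomorphism M_{n+1}/𝔞^n·M_{n+1} ≅ M_n for every n ≥ 1. Let M̂ = lim_n M_n (the submodule of ∏_n M_n of compatible families). Then for every m ≥ 1 the kernel of the projection M̂ → M_m equals 𝔞^m·M̂ (equivalently, the submodule lim_{n≥m} 𝔞^m M_n of M̂ coincides with 𝔞^m·M̂), so the projection induces an isomorphism M̂/𝔞^m·M̂ ≅ M_m; in particular M̂ is 𝔞-adically complete and separated. -/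
/-- The inverse limit `lim_n M_n` of an inverse system of `A`-modules, realized as the
submodule of compatible families in the product. -/
def invLimit {A : Type*} [CommRing A] {M : ℕ → Type*} [∀ n, AddCommGroup (M n)]
    [∀ n, Module A (M n)] (f : ∀ n : ℕ, M (n + 1) →ₗ[A] M n) :
    Submodule A (∀ n, M n) where
  carrier := {x | ∀ n : ℕ, f n (x (n + 1)) = x n}
  add_mem' := by
    intro a b ha hb n
    simp only [Pi.add_apply, map_add, ha n, hb n]
  zero_mem' := by
    intro n
    simp only [Pi.zero_apply, map_zero]
  smul_mem' := by
    intro c a ha n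
    simp only [Pi.smul_apply, map_smul, ha n]

theorem invLimit_lim {A : Type*} [CommRing A] {M : ℕ → Type*} [∀ n, AddCommGroup (M n)]
    [∀ n, Module A (M n)] (f : ∀ n : ℕ, M (n + 1) →ₗ[A] M n) (s : ℕ → invLimit f)
    (hs : ∀ k, 1 ≤ k → (s (k + 1)).1 k = (s k).1 k) :
    ∃ t : invLimit f, ∀ k, 1 ≤ k → t.1 k = (s k).1 k := by
  refine ⟨⟨fun n => (s (n + 1)).1 n, ?_⟩, fun k hk => hs k hk⟩
  intro n
  change f n ((s (n + 1 + 1)).1 (n + 1)) = (s (n + 1)).1 n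
  rw [hs (n + 1) (by omega)]
  exact (s (n + 1)).2 n

theorem invLimit_ext {A : Type*} [CommRing A] {M : ℕ → Type*} [∀ n, AddCommGroup (M n)]
    [∀ n, Module A (M n)] (f : ∀ n : ℕ, M (n + 1) →ₗ[A] M n) (x : invLimit f)
    (hx : ∀ k, 1 ≤ k → x.1 k = 0) : x = 0 := by
  apply Subtype.ext
  funext n
  rcases Nat.eq_zero_or_pos n with rfl | h
  · have := x.2 0
    rw [hx (0 + 1) (by omega), map_zero] at this
    exact this.symm
  · exact hx n h

theorem invLimit_down {A : Type*} [CommRing A] {M : ℕ → Type*} [∀ n, AddCommGroup (M n)]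
    [∀ n, Module A (M n)] (f : ∀ n : ℕ, M (n + 1) →ₗ[A] M n) (x : invLimit f)
    (m k : ℕ) (hx : x.1 (m + k) = 0) : x.1 m = 0 := by
  induction k with
  | zero => exact hx
  | succ k ih =>
    apply ih
    rw [← x.2 (m + k)]
    change f (m + k) (x.1 (m + (k + 1))) = 0
    rw [hx, map_zero]

theorem invLimit_extend {A : Type*} [CommRing A] {M : ℕ → Type*} [∀ n, AddCommGroup (M n)]
    [∀ n, Module A (M n)] (f : ∀ n : ℕ, M (n + 1) →ₗ[A] M n) (m : ℕ) :
    ∀ z : ∀ n, M n, (∀ n, m ≤ n → f n (z (n + 1)) = z n) →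
      ∃ x : invLimit f, ∀ n, m ≤ n → x.1 n = z n := by
  induction m with
  | zero => exact fun z hz => ⟨⟨z, fun n => hz n (Nat.zero_le n)⟩, fun n _ => rfl⟩
  | succ m ih =>
    intro z hz
    obtain ⟨x, hx⟩ := ih (Function.update z m (f m (z (m + 1)))) (by
      intro n hn
      rcases Nat.eq_or_lt_of_le hn with rfl | h
      · rw [Function.update_self, Function.update_of_ne (by omega)]
      · rw [Function.update_of_ne (by omega), Function.update_of_ne (by omega), hz n h])
    refine ⟨x, fun n hn => ?_⟩
    rw [hx n (by omega), Function.update_of_ne (by omega)]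

theorem invLimit_surj {A : Type*} [CommRing A] {M : ℕ → Type*} [∀ n, AddCommGroup (M n)]
    [∀ n, Module A (M n)] (f : ∀ n : ℕ, M (n + 1) →ₗ[A] M n)
    (hsurj : ∀ n : ℕ, 1 ≤ n → Function.Surjective (f n)) (m : ℕ) (hm : 1 ≤ m) (y : M m) :
    ∃ x : invLimit f, x.1 m = y := by
  have hg : ∀ n, ∃ g : M n → M (n + 1), 1 ≤ n → ∀ v, f n (g v) = v := by
    intro n
    by_cases hn : 1 ≤ n
    · exact ⟨Function.surjInv (hsurj n hn), fun _ v => Function.surjInv_eq _ v⟩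
    · exact ⟨fun _ => 0, fun h => absurd h hn⟩
  choose g hg using hg
  let z : ∀ n, M n := fun n => Nat.rec (motive := fun n => M n) 0
    (fun n v => if h : m = n + 1 then cast (congrArg M h) y else g n v) n
  have hz : ∀ n, z (n + 1) = if h : m = n + 1 then cast (congrArg M h) y else g n (z n) := fun n => rfl
  have hzm : z m = y := by
    obtain ⟨k, rfl⟩ : ∃ k, m = k + 1 := ⟨m - 1, by omega⟩
    rw [hz, dif_pos rfl]
    rfl
  obtain ⟨x, hx⟩ := invLimit_extend f m z (by
    intro n hn
    rw [hz, dif_neg (by omega), hg n (by omega)])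
  exact ⟨x, by rw [hx m le_rfl, hzm]⟩

theorem span_smul_exists {A : Type*} [CommRing A] {L : Type*} [AddCommGroup L] [Module A L]
    {r : ℕ} (a : Fin r → A) (N : Submodule A L) (w : L)
    (hw : w ∈ Ideal.span (Set.range a) • N) :
    ∃ y : Fin r → L, (∀ i, y i ∈ N) ∧ w = ∑ i, a i • y i := by
  induction hw using Submodule.smul_induction_on' with
  | smul c hc n hn =>
    obtain ⟨b, hb⟩ := (Submodule.mem_span_range_iff_exists_fun A).1 hc
    refine ⟨fun i => b i • n, fun i => N.smul_mem _ hn, ?_⟩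
    rw [← hb, Finset.sum_smul]
    refine Finset.sum_congr rfl fun i _ => ?_
    rw [smul_smul, smul_eq_mul, mul_comm]
  | add u _ v _ hu hv =>
    obtain ⟨y, hy, rfl⟩ := hu
    obtain ⟨y', hy', rfl⟩ := hv
    refine ⟨fun i => y i + y' i, fun i => N.add_mem (hy i) (hy' i), ?_⟩
    simp only [smul_add, Finset.sum_add_distrib]

/-- Let `𝔞` be a finitely generated ideal of `A` and `(M_n)` an inverse system of
`A`-modules with `𝔞^n·M_n = 0` and `M_{n+1}/𝔞^n·M_{n+1} ≅ M_n` via the transition map,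
for every `n ≥ 1`.  Then for each `m ≥ 1` the projection `M̂ = lim_n M_n → M_m` is
surjective with kernel `𝔞^m·M̂` (so it induces `M̂/𝔞^m·M̂ ≅ M_m`); in particular `M̂` is
`𝔞`-adically complete and separated. -/
theorem invLimit_adic (A : Type*) [CommRing A] (𝔞 : Ideal A) (hfg : 𝔞.FG)
    (M : ℕ → Type*) [∀ n, AddCommGroup (M n)] [∀ n, Module A (M n)]
    (f : ∀ n : ℕ, M (n + 1) →ₗ[A] M n)
    (hann : ∀ n : ℕ, 1 ≤ n → (𝔞 ^ n • ⊤ : Submodule A (M n)) = ⊥)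
    (hsurj : ∀ n : ℕ, 1 ≤ n → Function.Surjective (f n))
    (hker : ∀ n : ℕ, 1 ≤ n → LinearMap.ker (f n) = (𝔞 ^ n • ⊤ : Submodule A (M (n + 1)))) :
    (∀ m : ℕ, 1 ≤ m →
      Function.Surjective
        ((LinearMap.proj m : (∀ n, M n) →ₗ[A] M m).comp (invLimit f).subtype) ∧
      LinearMap.ker
          ((LinearMap.proj m : (∀ n, M n) →ₗ[A] M m).comp (invLimit f).subtype)
        = (𝔞 ^ m • ⊤ : Submodule A (invLimit f))) ∧
    IsAdicComplete 𝔞 (invLimit f) := by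
  set p : ∀ m, invLimit f →ₗ[A] M m := fun m =>
    (LinearMap.proj m : (∀ n, M n) →ₗ[A] M m).comp (invLimit f).subtype with hp
  have pa : ∀ m (x : invLimit f), p m x = x.1 m := fun m x => rfl
  have hps : ∀ m, 1 ≤ m → Function.Surjective (p m) := fun m hm y =>
    invLimit_surj f hsurj m hm y
  have hle : ∀ m, 1 ≤ m → ∀ x ∈ (𝔞 ^ m • ⊤ : Submodule A (invLimit f)), x.1 m = 0 := by
    intro m hm x hx
    have h : p m x ∈ Submodule.map (p m) (𝔞 ^ m • ⊤) := Submodule.mem_map_of_mem hx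
    rw [Submodule.map_smul''] at h
    have h2 := Submodule.smul_mono (le_refl (𝔞 ^ m)) (le_top (a := Submodule.map (p m) ⊤)) h
    rw [hann m hm] at h2
    exact h2
  have step : ∀ n, 1 ≤ n → ∀ x : invLimit f, x.1 n = 0 →
      ∃ u ∈ (𝔞 ^ n • ⊤ : Submodule A (invLimit f)), (x - u).1 (n + 1) = 0 := by
    intro n hn x hx
    have h1 : x.1 (n + 1) ∈ LinearMap.ker (f n) := by
      rw [LinearMap.mem_ker, x.2 n, hx]
    have ht : (⊤ : Submodule A (M (n + 1))) = Submodule.map (p (n + 1)) ⊤ := by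
      rw [Submodule.map_top, LinearMap.range_eq_top.2 (hps (n + 1) (by omega))]
    rw [hker n hn, ht, ← Submodule.map_smul''] at h1
    obtain ⟨u, hu, hux⟩ := h1
    refine ⟨u, hu, ?_⟩
    rw [← pa, map_sub, hux, pa, sub_self]
  have hge : ∀ m, 1 ≤ m → ∀ x : invLimit f, x.1 m = 0 →
      x ∈ (𝔞 ^ m • ⊤ : Submodule A (invLimit f)) := by
    intro m hm x hx
    obtain ⟨r, a, ha⟩ := Submodule.fg_iff_exists_fin_generating_family.1 (hfg.pow (n := m))
    have step2 : ∀ k (x : invLimit f), ∃ y : Fin r → invLimit f, x.1 (m + k) = 0 →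
        (1 ≤ k → ∀ i, (y i).1 k = 0) ∧ (x - ∑ i, a i • y i).1 (m + k + 1) = 0 := by
      intro k x
      by_cases hx : x.1 (m + k) = 0
      · obtain ⟨u, hu, hxu⟩ := step (m + k) (by omega) x hx
        rw [pow_add, mul_smul, ← ha] at hu
        obtain ⟨y, hy, rfl⟩ := span_smul_exists a _ u hu
        exact ⟨y, fun _ => ⟨fun hk i => hle k hk _ (hy i), hxu⟩⟩
      · exact ⟨0, fun h => absurd h hx⟩
    choose Y hY using step2
    let X : ℕ → invLimit f := fun k => Nat.rec (motive := fun _ => invLimit f) x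
      (fun k v => v - ∑ i, a i • Y k v i) k
    have X0 : X 0 = x := rfl
    have Xs : ∀ k, X (k + 1) = X k - ∑ i, a i • Y k (X k) i := fun k => rfl
    have hX : ∀ k, (X k).1 (m + k) = 0 := by
      intro k
      induction k with
      | zero => exact hx
      | succ k ih => rw [Xs]; exact (hY k (X k) ih).2
    let S : Fin r → ℕ → invLimit f := fun i k => ∑ j ∈ Finset.range k, Y j (X j) i
    have hS : ∀ k, X k = x - ∑ i, a i • S i k := by
      intro k
      induction k with
      | zero => simp [S, X0]
      | succ k ih =>
        have h1 : ∀ i, S i (k + 1) = S i k + Y k (X k) i := fun i => Finset.sum_range_succ _ _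
        simp only [h1, smul_add, Finset.sum_add_distrib]
        rw [Xs, ← sub_sub, ← ih]
    have hlim : ∀ i, ∃ t : invLimit f, ∀ k, 1 ≤ k → t.1 k = (S i k).1 k := by
      intro i
      apply invLimit_lim
      intro k hk
      have : S i (k + 1) = S i k + Y k (X k) i := Finset.sum_range_succ _ _
      rw [this, ← pa, map_add, pa, pa, (hY k (X k) (hX k)).1 hk i, add_zero]
    choose t ht using hlim
    have hfin : x - ∑ i, a i • t i = 0 := by
      apply invLimit_ext
      intro k hk
      have h1 : (X k).1 k = 0 := invLimit_down f _ k m (by rw [add_comm]; exact hX k)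
      rw [hS, ← pa] at h1
      rw [← pa, ← h1]
      simp only [map_sub, map_sum, map_smul]
      simp only [pa, ht _ k hk]
    rw [sub_eq_zero.1 hfin]
    refine Submodule.sum_mem _ fun i _ => Submodule.smul_mem_smul ?_ trivial
    rw [← ha]
    exact Submodule.subset_span ⟨i, rfl⟩
  refine ⟨fun m hm => ⟨hps m hm, ?_⟩, ?_⟩
  · ext x
    exact ⟨hge m hm x, hle m hm x⟩
  · have haus : IsHausdorff 𝔞 (invLimit f) := ⟨fun x hx => invLimit_ext f x fun k hk =>
      hle k hk x (by simpa using SModEq.sub_mem.1 (hx k))⟩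
    have prec : IsPrecomplete 𝔞 (invLimit f) := by
      refine ⟨fun s hs => ?_⟩
      obtain ⟨t, ht⟩ := invLimit_lim f s (by
        intro k hk
        have := hle k hk _ (SModEq.sub_mem.1 (hs (Nat.le_succ k)))
        rw [← pa, map_sub, sub_eq_zero] at this
        exact this.symm)
      refine ⟨t, fun n => SModEq.sub_mem.2 ?_⟩
      rcases Nat.eq_zero_or_pos n with rfl | h
      · simp
      · apply hge n h
        rw [← pa, map_sub, pa, pa, ht n h, sub_self]
    exact { haus, prec with }
end

section
/- Let R be a commutative ring, A a commutative R-algebra, α ∈ A, and ∂ an α-derivation of A over R. Then for every x ∈ A and every positive integer n: ∂(x^n) = ∑_{m=1}^{n} C(n,m)·x^{n−m}·α^{m−1}·∂(x)^m. -/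
/-- An `α`-derivation of a commutative `R`-algebra `A` over `R`: an `R`-linear map
`∂ : A → A` with `∂(1) = 0` satisfying the twisted Leibniz rule
`∂(xy) = ∂(x)·y + x·∂(y) + α·∂(x)·∂(y)`. -/
structure AlphaDerivation (R A : Type*) [CommRing R] [CommRing A] [Algebra R A]
    (α : A) where
  toFun : A → A
  map_add' : ∀ x y : A, toFun (x + y) = toFun x + toFun y
  map_smul' : ∀ (r : R) (x : A), toFun (r • x) = r • toFun x
  map_one' : toFun 1 = 0
  leibniz' : ∀ x y : A, toFun (x * y) =
    toFun x * y + x * toFun y + α * (toFun x * toFun y)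

theorem alphaDerivation_pow_aux (R A : Type*) [CommRing R] [CommRing A] [Algebra R A]
    (α : A) (D : AlphaDerivation R A α) (x : A) (n : ℕ) :
    D.toFun (x ^ n) = ∑ k ∈ Finset.range n,
      (n.choose (k + 1) : A) * x ^ (n - (k + 1)) * α ^ k * (D.toFun x) ^ (k + 1) := by
  induction n with
  | zero => simp [D.map_one']
  | succ n ih =>
    have h1 : ∑ k ∈ Finset.range (n + 1),
        (n.choose k : A) * x ^ (n - k) * α ^ k * (D.toFun x) ^ (k + 1)
        = α * D.toFun (x ^ n) * D.toFun x + x ^ n * D.toFun x := by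
      rw [Finset.sum_range_succ', ih, Finset.mul_sum, Finset.sum_mul]
      congr 1
      · refine Finset.sum_congr rfl fun k _ => ?_
        ring
      · simp
    have h2 : ∑ k ∈ Finset.range (n + 1),
        (n.choose (k + 1) : A) * x ^ (n - k) * α ^ k * (D.toFun x) ^ (k + 1)
        = D.toFun (x ^ n) * x := by
      rw [Finset.sum_range_succ, ih, Finset.sum_mul]
      simp only [Nat.choose_succ_self, Nat.cast_zero, zero_mul, add_zero]
      refine Finset.sum_congr rfl fun k hk => ?_
      have hk' := Finset.mem_range.mp hk
      have e : n - k = n - (k + 1) + 1 := by omega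
      rw [e, pow_succ]
      ring
    have h3 : ∑ k ∈ Finset.range (n + 1),
        ((n + 1).choose (k + 1) : A) * x ^ (n + 1 - (k + 1)) * α ^ k * (D.toFun x) ^ (k + 1)
        = (α * D.toFun (x ^ n) * D.toFun x + x ^ n * D.toFun x) + D.toFun (x ^ n) * x := by
      rw [← h1, ← h2, ← Finset.sum_add_distrib]
      refine Finset.sum_congr rfl fun k _ => ?_
      rw [Nat.choose_succ_succ, Nat.add_sub_add_right]
      push_cast
      ring
    rw [h3, pow_succ, D.leibniz']
    ring

/-- For an `α`-derivation `∂` of `A` over `R` and a positive integer `n`: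
`∂(x^n) = ∑_{m=1}^n C(n,m)·x^{n−m}·α^{m−1}·∂(x)^m`. -/
theorem alphaDerivation_pow (R A : Type*) [CommRing R] [CommRing A] [Algebra R A]
    (α : A) (D : AlphaDerivation R A α) (x : A) (n : ℕ) (hn : 0 < n) :
    D.toFun (x ^ n) = ∑ m ∈ Finset.Icc 1 n,
      (n.choose m : A) * x ^ (n - m) * α ^ (m - 1) * (D.toFun x) ^ m := by
  rw [alphaDerivation_pow_aux R A α D x n, Finset.range_eq_Ico]
  have h := Finset.sum_Ico_add'
    (fun m => (n.choose m : A) * x ^ (n - m) * α ^ (m - 1) * (D.toFun x) ^ m) 0 n 1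
  have e : Finset.Ico (0 + 1) (n + 1) = Finset.Icc 1 n := by
    ext m
    simp only [Finset.mem_Ico, Finset.mem_Icc]
    omega
  rw [e] at h
  simpa only [Nat.add_sub_cancel] using h
end

section
/- Let R be a commutative ring, A a commutative R-algebra, and α ∈ A. The assignment sending an α-derivation ∂ of A over R to the map s : A → E^α(A), s(x) = x + ∂(x)·T, is well defined (each such s is an R-algebra homomorphism with π₀∘s = id_A) and is a bijection from the set of α-derivations of A over R onto the set of R-algebra homomorphisms s : A → E^α(A) satisfying π₀∘s = id_A. -/
/-- The ideal `(T² − α·T)` of `A[T]`. -/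
noncomputable def twIdeal {A : Type*} [CommRing A] (α : A) : Ideal (Polynomial A) :=
  Ideal.span {Polynomial.X ^ 2 - Polynomial.C α * Polynomial.X}

/-- The twisted extension `E^α(A) = A[T]/(T² − α·T)`. -/
abbrev TwExt {A : Type*} [CommRing A] (α : A) : Type _ :=
  Polynomial A ⧸ twIdeal α

/-- The augmentation `π₀ : E^α(A) → A` determined by `T ↦ 0`. -/
noncomputable def piZero {A : Type*} [CommRing A] (α : A) : TwExt α →+* A :=
  Ideal.Quotient.lift (twIdeal α) (Polynomial.evalRingHom 0) (by
    intro a ha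
    obtain ⟨c, rfl⟩ := Ideal.mem_span_singleton'.mp ha
    simp)

open Polynomial in
theorem tw_inj {A : Type*} [CommRing A] (α a b a' b' : A)
    (h : Ideal.Quotient.mk (twIdeal α) (C a + C b * X) =
      Ideal.Quotient.mk (twIdeal α) (C a' + C b' * X)) : a = a' ∧ b = b' := by
  rcases subsingleton_or_nontrivial A with hA | hA
  · exact ⟨Subsingleton.elim _ _, Subsingleton.elim _ _⟩
  rw [Ideal.Quotient.eq, twIdeal, Ideal.mem_span_singleton] at h
  have hm : (X ^ 2 - C α * X : A[X]).Monic := by monicity!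
  have hd : (X ^ 2 - C α * X : A[X]).natDegree = 2 := by compute_degree!
  have h0 : (C a + C b * X - (C a' + C b' * X) : A[X]) = 0 := by
    by_contra hne
    refine hm.not_dvd_of_natDegree_lt hne ?_ h
    rw [hd]
    have : (C a + C b * X - (C a' + C b' * X) : A[X]).natDegree ≤ 1 := by compute_degree
    omega
  have h1 := congrArg (fun p => coeff p 0) h0
  have h2 := congrArg (fun p => coeff p 1) h0
  simp [coeff_C] at h1 h2
  exact ⟨sub_eq_zero.mp h1, sub_eq_zero.mp h2⟩

open Polynomial in
theorem tw_sq {A : Type*} [CommRing A] (α : A) :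
    Ideal.Quotient.mk (twIdeal α) X * Ideal.Quotient.mk (twIdeal α) X =
      Ideal.Quotient.mk (twIdeal α) (C α) * Ideal.Quotient.mk (twIdeal α) X := by
  rw [← map_mul, ← map_mul, Ideal.Quotient.eq, twIdeal, ← pow_two]
  exact Ideal.subset_span rfl

open Polynomial in
theorem tw_surj {A : Type*} [CommRing A] (α : A) (z : TwExt α) :
    ∃ a b : A, z = Ideal.Quotient.mk (twIdeal α) (C a + C b * X) := by
  obtain ⟨p, rfl⟩ := Ideal.Quotient.mk_surjective z
  induction p using Polynomial.induction_on with
  | C a => exact ⟨a, 0, by simp⟩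
  | add p q hp hq =>
    obtain ⟨a, b, h⟩ := hp
    obtain ⟨c, d, h'⟩ := hq
    refine ⟨a + c, b + d, ?_⟩
    rw [map_add, h, h', ← map_add]
    congr 1
    simp only [map_add]
    ring
  | monomial n a h =>
    obtain ⟨c, d, h⟩ := h
    refine ⟨0, c + d * α, ?_⟩
    rw [pow_succ, ← mul_assoc, map_mul, h]
    have := tw_sq α
    simp only [map_add, map_mul, map_zero] at this ⊢
    linear_combination (Ideal.Quotient.mk (twIdeal α) (C d)) * this

open Polynomial in
theorem tw_mul {A : Type*} [CommRing A] (α a b c d : A) :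
    Ideal.Quotient.mk (twIdeal α) (C a + C b * X) *
      Ideal.Quotient.mk (twIdeal α) (C c + C d * X) =
      Ideal.Quotient.mk (twIdeal α)
        (C (a * c) + C (b * c + a * d + α * (b * d)) * X) := by
  have := tw_sq α
  simp only [map_add, map_mul] at this ⊢
  linear_combination (Ideal.Quotient.mk (twIdeal α) (C b)) *
    (Ideal.Quotient.mk (twIdeal α) (C d)) * this

open Polynomial in
theorem tw_add {A : Type*} [CommRing A] (α a b c d : A) :
    Ideal.Quotient.mk (twIdeal α) (C a + C b * X) +
      Ideal.Quotient.mk (twIdeal α) (C c + C d * X) =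
      Ideal.Quotient.mk (twIdeal α) (C (a + c) + C (b + d) * X) := by
  simp only [map_add, map_mul]
  ring

open Polynomial in
theorem tw_smul {R A : Type*} [CommRing R] [CommRing A] [Algebra R A] (α : A) (r : R) (a b : A) :
    r • Ideal.Quotient.mk (twIdeal α) (C a + C b * X) =
      Ideal.Quotient.mk (twIdeal α) (C (r • a) + C (r • b) * X) := by
  rw [← smul_C, ← smul_C, smul_mul_assoc, ← smul_add]
  rfl

open Polynomial in
theorem tw_pi {A : Type*} [CommRing A] (α a b : A) :
    piZero α (Ideal.Quotient.mk (twIdeal α) (C a + C b * X)) = a := by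
  simp [piZero]

/-- The assignment sending an `α`-derivation `∂` of `A` over `R` to
`s : A → E^α(A)`, `s(x) = x + ∂(x)·T`, is well defined (each such `s` is an `R`-algebra
homomorphism with `π₀ ∘ s = id`), and it is a bijection onto the set of `R`-algebra
homomorphisms `s : A → E^α(A)` with `π₀ ∘ s = id`. -/
theorem alphaDerivation_equiv_sections (R A : Type*) [CommRing R] [CommRing A]
    [Algebra R A] (α : A) :
    (∀ D : AlphaDerivation R A α, ∃ s : A →ₐ[R] TwExt α,
      (∀ x : A, s x = Ideal.Quotient.mk (twIdeal α)
        (Polynomial.C x + Polynomial.C (D.toFun x) * Polynomial.X)) ∧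
      (piZero α).comp s.toRingHom = RingHom.id A) ∧
    (∀ s : A →ₐ[R] TwExt α, (piZero α).comp s.toRingHom = RingHom.id A →
      ∃! D : AlphaDerivation R A α,
        ∀ x : A, s x = Ideal.Quotient.mk (twIdeal α)
          (Polynomial.C x + Polynomial.C (D.toFun x) * Polynomial.X)) := by
  constructor
  · intro D
    have hone : Ideal.Quotient.mk (twIdeal α) (Polynomial.C (1 : A) +
        Polynomial.C (D.toFun 1) * Polynomial.X) = 1 := by
      simp [D.map_one']
    have hmul : ∀ x y : A, Ideal.Quotient.mk (twIdeal α) (Polynomial.C (x * y) +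
        Polynomial.C (D.toFun (x * y)) * Polynomial.X) =
        Ideal.Quotient.mk (twIdeal α) (Polynomial.C x +
          Polynomial.C (D.toFun x) * Polynomial.X) *
        Ideal.Quotient.mk (twIdeal α) (Polynomial.C y +
          Polynomial.C (D.toFun y) * Polynomial.X) := by
      intro x y
      rw [tw_mul, D.leibniz']
    refine ⟨AlgHom.ofLinearMap
      { toFun := fun x => Ideal.Quotient.mk (twIdeal α)
          (Polynomial.C x + Polynomial.C (D.toFun x) * Polynomial.X)
        map_add' := fun x y => by rw [tw_add, D.map_add']
        map_smul' := fun r x => by rw [RingHom.id_apply, tw_smul, D.map_smul'] }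
      hone hmul, fun x => rfl, ?_⟩
    ext x
    exact tw_pi α x (D.toFun x)
  · intro s hs
    have key : ∀ x : A, ∃ d : A, s x = Ideal.Quotient.mk (twIdeal α)
        (Polynomial.C x + Polynomial.C d * Polynomial.X) := by
      intro x
      obtain ⟨a, b, h⟩ := tw_surj α (s x)
      have h1 : piZero α (s x) = x := RingHom.congr_fun hs x
      rw [h, tw_pi] at h1
      subst h1
      exact ⟨b, h⟩
    choose d hd using key
    refine ⟨⟨d, fun x y => ?_, fun r x => ?_, ?_, fun x y => ?_⟩, hd, ?_⟩
    · have h := map_add s x y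
      rw [hd, hd, hd, tw_add] at h
      exact (tw_inj _ _ _ _ _ h).2
    · have h := map_smul s r x
      rw [hd, hd, tw_smul] at h
      exact (tw_inj _ _ _ _ _ h).2
    · have h := map_one s
      rw [hd] at h
      refine (tw_inj α 1 _ 1 0 (h.trans ?_)).2
      simp
    · have h := map_mul s x y
      rw [hd, hd, hd, tw_mul] at h
      exact (tw_inj _ _ _ _ _ h).2
    · rintro ⟨e, _, _, _, _⟩ he
      have : e = d := funext fun x => (tw_inj _ _ _ _ _ ((he x).symm.trans (hd x))).2
      subst this
      rfl
end

section
/- Let R be a commutative ring, A a commutative R-algebra, I an ideal of A, and f : A → A' an R-algebra homomorphism which is I-adically étale (i.e. A'/I^nA' is étale over A/I^n for every n ≥ 1) and such that A' is IA'-adically complete and separated. Let α ∈ A be I-adically nilpotent (for every n ≥ 1 there is k with α^k ∈ I^n). Then every α-derivation ∂ of A over R extends uniquely along f to an f(α)-derivation ∂' of A' over R, i.e. there exists a unique f(α)-derivation ∂' of A' over R with ∂'∘f = f∘∂. -/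
theorem lift_formallyEtale {P Q C B : Type*} [CommRing P] [CommRing Q] [CommRing C] [CommRing B]
    [Algebra P Q] [Algebra.FormallyEtale P Q] (p : C →+* B) (hp : Function.Surjective p)
    (hker : IsNilpotent (RingHom.ker p)) (s : P →+* C) (q : Q →+* B)
    (hq : ∀ x, q (algebraMap P Q x) = p (s x)) :
    ∃ g : Q →+* C, (∀ x, g (algebraMap P Q x) = s x) ∧ ∀ x, p (g x) = q x := by
  letI : Algebra P C := s.toAlgebra
  letI : Algebra P B := (p.comp s).toAlgebra
  let p' : C →ₐ[P] B := { p with commutes' := fun _ => rfl }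
  let q' : Q →ₐ[P] B := { q with commutes' := fun x => hq x }
  let g := Algebra.FormallySmooth.liftOfSurjective q' p' hp hker
  refine ⟨g.toRingHom, fun x => g.commutes x, fun x => ?_⟩
  exact Algebra.FormallySmooth.liftOfSurjective_apply q' p' hp hker x

theorem unique_formallyEtale {P Q C B : Type*} [CommRing P] [CommRing Q] [CommRing C] [CommRing B]
    [Algebra P Q] [Algebra.FormallyEtale P Q] (p : C →+* B)
    (hker : IsNilpotent (RingHom.ker p)) (g₁ g₂ : Q →+* C)
    (h : ∀ x, g₁ (algebraMap P Q x) = g₂ (algebraMap P Q x))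
    (hp : ∀ x, p (g₁ x) = p (g₂ x)) : g₁ = g₂ := by
  letI : Algebra P C := (g₁.comp (algebraMap P Q)).toAlgebra
  let g₁' : Q →ₐ[P] C := { g₁ with commutes' := fun _ => rfl }
  let g₂' : Q →ₐ[P] C := { g₂ with commutes' := fun x => (h x).symm }
  have := Algebra.FormallyUnramified.ext' p hker g₁' g₂' hp
  ext x
  exact DFunLike.congr_fun this x

/-- The projection from the twisted dual numbers. -/
def reHom {B : Type*} [CommRing B] (a : B) : QuadraticAlgebra B 0 a →+* B where
  toFun z := z.re
  map_one' := rfl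
  map_zero' := rfl
  map_add' _ _ := rfl
  map_mul' x y := by simp

theorem reHom_surjective {B : Type*} [CommRing B] (a : B) : Function.Surjective (reHom a) :=
  fun x => ⟨⟨x, 0⟩, rfl⟩

theorem omega_pow {B : Type*} [CommRing B] (a : B) (k : ℕ) :
    (⟨0, 1⟩ : QuadraticAlgebra B 0 a) ^ (k + 1) = ⟨0, a ^ k⟩ := by
  induction k with
  | zero => simp
  | succ k ih =>
    rw [pow_succ, ih]
    ext <;> simp [pow_succ, mul_comm]

theorem ker_reHom_nilpotent {B : Type*} [CommRing B] (a : B) (ha : IsNilpotent a) :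
    IsNilpotent (RingHom.ker (reHom a)) := by
  obtain ⟨k, hk⟩ := ha
  refine ⟨k + 1, ?_⟩
  have h : RingHom.ker (reHom a) ≤ Ideal.span {(⟨0, 1⟩ : QuadraticAlgebra B 0 a)} := by
    intro z hz
    have hz : z.re = 0 := hz
    rw [Ideal.mem_span_singleton]
    refine ⟨⟨z.im, 0⟩, ?_⟩
    ext <;> simp [hz]
  have h2 := Ideal.pow_right_mono h (k + 1)
  rw [Ideal.span_singleton_pow, omega_pow, hk] at h2
  rw [Ideal.zero_eq_bot, eq_bot_iff]
  refine h2.trans ?_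
  rw [Ideal.span_le]
  rintro _ rfl
  rfl

/-- Derivations relative to a ring map. -/
structure RelDer {A A' B : Type*} [CommRing A] [CommRing A'] [CommRing B]
    (f : A →+* A') (D : A → A) (π : A' →+* B) (a : B) (d : A' → B) : Prop where
  add : ∀ x y, d (x + y) = d x + d y
  one : d 1 = 0
  mul : ∀ x y, d (x * y) = d x * π y + π x * d y + a * (d x * d y)
  comp : ∀ x, d (f x) = π (f (D x))

/-- The ring map attached to a twisted derivation. -/
def tw {A B : Type*} [CommRing A] [CommRing B] (π : A →+* B) (a : B) (d : A → B)
    (hadd : ∀ x y, d (x + y) = d x + d y) (hone : d 1 = 0)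
    (hmul : ∀ x y, d (x * y) = d x * π y + π x * d y + a * (d x * d y)) :
    A →+* QuadraticAlgebra B 0 a where
  toFun x := ⟨π x, d x⟩
  map_one' := by ext <;> simp [hone, QuadraticAlgebra.re_one, QuadraticAlgebra.im_one]
  map_zero' := by
    have : d 0 = 0 := by simpa using hadd 0 0
    ext <;> simp [this]
  map_add' x y := by ext <;> simp [hadd]
  map_mul' x y := by
    ext
    · simp
    · simp [hmul]; ring

theorem ring_hom_kills {A C B : Type*} [CommRing A] [CommRing B] [CommRing C]
    (p : C →+* B) (hker : IsNilpotent (RingHom.ker p)) (s : A →+* C) (I : Ideal A) (n : ℕ)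
    (h : ∀ x ∈ I ^ n, p (s x) = 0) : ∃ m, 0 < m ∧ ∀ x ∈ I ^ m, s x = 0 := by
  obtain ⟨k, hk⟩ := hker
  refine ⟨n * k + 1, Nat.succ_pos _, fun x hx => ?_⟩
  have hx := Ideal.pow_le_pow_right (Nat.le_succ _) hx
  have h1 : (I ^ n).map s ≤ RingHom.ker p := by
    rw [Ideal.map_le_iff_le_comap]
    exact h
  have h2 := Ideal.pow_right_mono h1 k
  rw [hk, ← Ideal.map_pow, ← pow_mul] at h2
  exact h2 (Ideal.mem_map_of_mem s hx)

theorem existsUnique_relDer {A A' B : Type*} [CommRing A] [CommRing A'] [CommRing B]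
    (I : Ideal A) (f : A →+* A')
    (hetale : ∀ n : ℕ, 0 < n →
      letI : Algebra (A ⧸ I ^ n) (A' ⧸ (I ^ n).map f) :=
        (Ideal.quotientMap ((I ^ n).map f) f Ideal.le_comap_map).toAlgebra
      Algebra.Etale (A ⧸ I ^ n) (A' ⧸ (I ^ n).map f))
    (α : A) (D : A → A) (hadd : ∀ x y, D (x + y) = D x + D y) (hone : D 1 = 0)
    (hmul : ∀ x y, D (x * y) = D x * y + x * D y + α * (D x * D y))
    (π : A' →+* B) (hα : IsNilpotent (π (f α))) (n : ℕ) (hn : ∀ x ∈ I ^ n, π (f x) = 0) :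
    ∃! d : A' → B, RelDer f D π (π (f α)) d := by
  let s : A →+* QuadraticAlgebra B 0 (π (f α)) := tw (π.comp f) (π (f α)) (fun x => π (f (D x)))
    (by simp [hadd]) (by simp [hone]) (by simp [hmul])
  have hker := ker_reHom_nilpotent _ hα
  obtain ⟨m, hm, hs⟩ := ring_hom_kills (reHom (π (f α))) hker s I n hn
  letI : Algebra (A ⧸ I ^ m) (A' ⧸ (I ^ m).map f) :=
        (Ideal.quotientMap ((I ^ m).map f) f Ideal.le_comap_map).toAlgebra
  haveI : Algebra.Etale (A ⧸ I ^ m) (A' ⧸ (I ^ m).map f) := hetale m hm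
  haveI : Algebra.FormallyEtale (A ⧸ I ^ m) (A' ⧸ (I ^ m).map f) := Algebra.Etale.formallyEtale
  have hal : ∀ x : A, algebraMap (A ⧸ I ^ m) (A' ⧸ (I ^ m).map f) (Ideal.Quotient.mk _ x) =
    Ideal.Quotient.mk _ (f x) := fun x => rfl
  have hq : ∀ x ∈ (I ^ m).map f, π x = 0 := by
    intro x hx
    have : (I ^ m).map f ≤ RingHom.ker π := by
      rw [Ideal.map_le_iff_le_comap]
      intro y hy
      exact congrArg QuadraticAlgebra.re (hs y hy)
    exact this hx
  refine existsUnique_of_exists_of_unique ?_ ?_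
  · obtain ⟨g, hg1, hg2⟩ := lift_formallyEtale (P := A ⧸ I ^ m) (Q := A' ⧸ (I ^ m).map f)
      (reHom (π (f α))) (reHom_surjective _) hker (Ideal.Quotient.lift _ s hs)
      (Ideal.Quotient.lift _ π hq) (by
        intro x
        obtain ⟨x, rfl⟩ := Ideal.Quotient.mk_surjective x
        rw [hal]
        simp only [Ideal.Quotient.lift_mk]
        rfl)
    have hre : ∀ x : A', (g (Ideal.Quotient.mk _ x)).re = π x := fun x => hg2 _
    refine ⟨fun x => (g (Ideal.Quotient.mk _ x)).im, ?_, ?_, ?_, ?_⟩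
    · intro x y; simp
    · simp [QuadraticAlgebra.im_one]
    · intro x y
      simp [hre]; ring
    · intro x
      have := hg1 (Ideal.Quotient.mk _ x)
      rw [hal] at this
      simp only [this]
      rfl
  · intro d₁ d₂ h₁ h₂
    have key : ∀ d, RelDer f D π (π (f α)) d → ∃ g : (A' ⧸ (I ^ m).map f) →+*
        QuadraticAlgebra B 0 (π (f α)), ∀ x, g (Ideal.Quotient.mk _ x) = ⟨π x, d x⟩ := by
      intro d h
      have hle : (I ^ m).map f ≤ RingHom.ker (tw π (π (f α)) d h.add h.one h.mul) := by
        rw [Ideal.map_le_iff_le_comap]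
        intro y hy
        have h1 := hs y hy
        have h2 : tw π (π (f α)) d h.add h.one h.mul (f y) = s y := by
          ext
          · rfl
          · exact h.comp y
        exact h2.trans h1
      exact ⟨Ideal.Quotient.lift _ (tw π (π (f α)) d h.add h.one h.mul) hle, fun x => rfl⟩
    obtain ⟨g₁, hg₁⟩ := key d₁ h₁
    obtain ⟨g₂, hg₂⟩ := key d₂ h₂
    have := unique_formallyEtale (P := A ⧸ I ^ m) (reHom (π (f α))) hker g₁ g₂ (by
      intro x
      obtain ⟨x, rfl⟩ := Ideal.Quotient.mk_surjective x
      rw [hal, hg₁, hg₂, h₁.comp, h₂.comp]) (by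
      intro x
      obtain ⟨x, rfl⟩ := Ideal.Quotient.mk_surjective x
      rw [hg₁, hg₂]; rfl)
    ext x
    have h3 := hg₁ x
    rw [this, hg₂] at h3
    exact (congrArg QuadraticAlgebra.im h3).symm


universe u

/-- Unique extension of an `α`-derivation along an `I`-adically étale map `f : A → A'`
with `A'` `IA'`-adically complete and separated and `α` `I`-adically nilpotent:  there
is a unique `f(α)`-derivation `∂'` of `A'` over `R` with `∂' ∘ f = f ∘ ∂`. -/
theorem alphaDerivation_etale_extension (R : Type*) (A A' : Type u)
    [CommRing R] [CommRing A] [CommRing A'] [Algebra R A] [Algebra R A']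
    (I : Ideal A) (f : A →ₐ[R] A')
    (hetale : ∀ n : ℕ, 0 < n →
      letI : Algebra (A ⧸ I ^ n) (A' ⧸ (I ^ n).map f.toRingHom) :=
        (Ideal.quotientMap ((I ^ n).map f.toRingHom) f.toRingHom
          Ideal.le_comap_map).toAlgebra
      Algebra.Etale (A ⧸ I ^ n) (A' ⧸ (I ^ n).map f.toRingHom))
    (hcomplete : IsAdicComplete (I.map f.toRingHom) A')
    (α : A) (hα : ∀ n : ℕ, ∃ k : ℕ, α ^ k ∈ I ^ n)
    (D : AlphaDerivation R A α) :
    ∃! D' : AlphaDerivation R A' (f α),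
      ∀ x : A, D'.toFun (f x) = f (D.toFun x) := by
  have hex : ∀ n : ℕ, ∃! d : A' → A' ⧸ (I.map f.toRingHom) ^ n,
      RelDer f.toRingHom D.toFun (Ideal.Quotient.mk _) (Ideal.Quotient.mk _ (f α)) d := by
    intro n
    have hn : ∀ x ∈ I ^ n, Ideal.Quotient.mk ((I.map f.toRingHom) ^ n) (f.toRingHom x) = 0 := by
      intro x hx
      rw [Ideal.Quotient.eq_zero_iff_mem, ← Ideal.map_pow]
      exact Ideal.mem_map_of_mem _ hx
    refine existsUnique_relDer I f.toRingHom hetale α D.toFun D.map_add' D.map_one' D.leibniz'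
      (Ideal.Quotient.mk ((I.map f.toRingHom) ^ n)) ?_ n hn
    obtain ⟨k, hk⟩ := hα n
    refine ⟨k, ?_⟩
    rw [← map_pow, ← map_pow]
    exact hn _ hk
  choose d hd hdu using hex
  have hmk : ∀ (n : ℕ) (x y : A'), x ≡ y [SMOD ((I.map f.toRingHom) ^ n • ⊤ : Ideal A')] ↔
      Ideal.Quotient.mk ((I.map f.toRingHom) ^ n) x = Ideal.Quotient.mk _ y := by
    intro n x y
    rw [SModEq.sub_mem, Ideal.Quotient.eq]
    simp
  have hsep : ∀ x y : A', (∀ n, Ideal.Quotient.mk ((I.map f.toRingHom) ^ n) x =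
      Ideal.Quotient.mk _ y) → x = y := by
    intro x y h
    haveI := hcomplete.toIsHausdorff
    exact (IsHausdorff.eq_iff_smodEq (I := I.map f.toRingHom)).2 fun n => (hmk n x y).2 (h n)
  have hcompat : ∀ (m n : ℕ) (h : m ≤ n) (x : A'),
      Ideal.Quotient.factor (Ideal.pow_le_pow_right (I := I.map f.toRingHom) h) (d n x) = d m x := by
    intro m n h x
    refine congrFun (hdu m (fun x => Ideal.Quotient.factor
      (Ideal.pow_le_pow_right (I := I.map f.toRingHom) h) (d n x)) ⟨?_, ?_, ?_, ?_⟩) x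
    · intro x y; simp only [map_add, map_mul, map_zero, map_one, Ideal.Quotient.factor_mk, (hd n).add]
    · simp only [map_add, map_mul, map_zero, map_one, Ideal.Quotient.factor_mk, (hd n).one]
    · intro x y; simp only [map_add, map_mul, map_zero, map_one, Ideal.Quotient.factor_mk, (hd n).mul]
    · intro x; simp only [(hd n).comp, Ideal.Quotient.factor_mk]
  have hL : ∀ x : A', ∃ L : A', ∀ n, Ideal.Quotient.mk ((I.map f.toRingHom) ^ n) L = d n x := by
    intro x
    choose r hr using fun n => Ideal.Quotient.mk_surjective (d n x)
    obtain ⟨L, hL⟩ := hcomplete.toIsPrecomplete.prec' r (by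
      intro m n h
      rw [hmk, hr, ← hcompat m n h, ← hr n, Ideal.Quotient.factor_mk])
    exact ⟨L, fun n => by rw [← (hmk n _ _).1 (hL n), hr]⟩
  choose D' hD' using hL
  have hadd : ∀ x y, D' (x + y) = D' x + D' y := fun x y => hsep _ _ fun n => by
    simp only [map_add, map_mul, map_zero, map_one, Ideal.Quotient.factor_mk, hD', (hd n).add]
  have hone : D' 1 = 0 := hsep _ _ fun n => by simp only [map_add, map_mul, map_zero, map_one, Ideal.Quotient.factor_mk, hD', (hd n).one]
  have hmul : ∀ x y, D' (x * y) = D' x * y + x * D' y + f α * (D' x * D' y) :=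
    fun x y => hsep _ _ fun n => by simp only [map_add, map_mul, map_zero, map_one, Ideal.Quotient.factor_mk, hD', (hd n).mul]
  have hcomp : ∀ x, D' (f x) = f (D.toFun x) := fun x => hsep _ _ fun n => by
    rw [hD']; exact (hd n).comp x
  refine ⟨⟨D', hadd, ?_, hone, hmul⟩, hcomp, ?_⟩
  · intro r x
    have h0 : D' (algebraMap R A' r) = 0 := by
      rw [← f.commutes, hcomp, Algebra.algebraMap_eq_smul_one, D.map_smul', D.map_one', smul_zero,
        map_zero]
    rw [Algebra.smul_def, hmul, h0, Algebra.smul_def]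
    ring
  · rintro ⟨E, Eadd, Esmul, Eone, Emul⟩ hE
    have hE : ∀ x, E (f x) = f (D.toFun x) := hE
    have : E = D' := by
      ext x
      refine hsep _ _ fun n => ?_
      rw [hD']
      refine congrFun (hdu n (fun x => Ideal.Quotient.mk _ (E x)) ⟨?_, ?_, ?_, ?_⟩) x
      · intro x y; simp only [map_add, map_mul, map_zero, map_one, Ideal.Quotient.factor_mk, Eadd]
      · simp only [map_add, map_mul, map_zero, map_one, Ideal.Quotient.factor_mk, Eone]
      · intro x y; simp only [map_add, map_mul, map_zero, map_one, Ideal.Quotient.factor_mk, Emul]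
      · intro x; exact congrArg _ (hE x)
    subst this
    rfl
end
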